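/- arXiv:2408.11620 — 5 statements merged into one kernel-verified Lean document; each statement's English description precedes it below -/
import Mathlib

section
/- Let p be in the tipless simplex Δ*_m and q in Δ*_n, let c ∈ ℝ^{m×n}, and let (β_t)_{t≥0} be a positive, nondecreasing, concave annealing schedule (i.e. the difference sequence α_t = β_t − β_{t−1} is nonnegative and nonincreasing), with limits β_∞ = lim β_t ∈ (0, ∞] and α_∞ = lim α_t ∈ [0, ∞). Let (π_t) be the sequence generated by Annealed Sinkhorn. Then the sequence (π_t) has at least one accumulation point, and every accumulation point π_∞ of (π_t) is a minimizer over Γ(*,q) of the functional F_{α_∞,β_∞}(π) = ⟨c,π⟩ + (1/α_∞)·KL(π𝟙 | p) + (1/β_∞)·KL(π | π^ref), with the conventions 1/∞ = 0 and (1/0)·KL(p̃|p) equal to the convex indicator of the set {p} (it is 0 if p̃ = p and +∞ otherwise). -/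
open Finset Filter Topology ENNReal

noncomputable section

/-- Frobenius inner product `⟨c, π⟩ = ∑_{ij} c_ij π_ij`. -/
def frob {m n : ℕ} (c π : Matrix (Fin m) (Fin n) ℝ) : ℝ := ∑ i, ∑ j, c i j * π i j

/-- Row sums `π𝟙`. -/
def rowSum {m n : ℕ} (π : Matrix (Fin m) (Fin n) ℝ) : Fin m → ℝ := fun i => ∑ j, π i j

/-- Column sums `πᵀ𝟙`. -/
def colSum {m n : ℕ} (π : Matrix (Fin m) (Fin n) ℝ) : Fin n → ℝ := fun j => ∑ i, π i j

/-- Kullback–Leibler divergence between nonnegative vectors. -/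
def KLvec {k : ℕ} (a b : Fin k → ℝ) : ℝ := ∑ i, (a i * Real.log (a i / b i) - a i + b i)

/-- Kullback–Leibler divergence between nonnegative matrices. -/
def KLmat {m n : ℕ} (a b : Matrix (Fin m) (Fin n) ℝ) : ℝ :=
  ∑ i, ∑ j, (a i j * Real.log (a i j / b i j) - a i j + b i j)

/-- The tipless simplex `Δ*_k`: strictly positive entries summing to 1. -/
def simplexPos (k : ℕ) : Set (Fin k → ℝ) := {p | (∀ i, 0 < p i) ∧ ∑ i, p i = 1}

/-- The simplex `Δ_k`: nonnegative entries summing to 1. -/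
def simplexNN (k : ℕ) : Set (Fin k → ℝ) := {p | (∀ i, 0 ≤ p i) ∧ ∑ i, p i = 1}

/-- Transport plans `Γ(p, q)`. -/
def Gamma {m n : ℕ} (p : Fin m → ℝ) (q : Fin n → ℝ) : Set (Matrix (Fin m) (Fin n) ℝ) :=
  {π | (∀ i j, 0 ≤ π i j) ∧ rowSum π = p ∧ colSum π = q}

/-- Half-relaxed plans `Γ(*, q)`. -/
def GammaStar {m n : ℕ} (q : Fin n → ℝ) : Set (Matrix (Fin m) (Fin n) ℝ) :=
  {π | (∀ i j, 0 ≤ π i j) ∧ colSum π = q}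

/-- Reference plan `π^ref = (mn)⁻¹ 𝟙𝟙ᵀ`. -/
def piRef (m n : ℕ) : Matrix (Fin m) (Fin n) ℝ := fun _ _ => 1 / (m * n)

/-- Optimal transport value `OT(p,q)`. -/
def OTval {m n : ℕ} (c : Matrix (Fin m) (Fin n) ℝ) (p : Fin m → ℝ) (q : Fin n → ℝ) : ℝ :=
  ⨅ π : Gamma p q, frob c π.1

/-- Entropic OT objective `⟨c,π⟩ + β⁻¹ KL(π|π^ref)`. -/
def eotObj {m n : ℕ} (c : Matrix (Fin m) (Fin n) ℝ) (β : ℝ) (π : Matrix (Fin m) (Fin n) ℝ) : ℝ :=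
  frob c π + β⁻¹ * KLmat π (piRef m n)

/-- Entropic OT value `EOT_β(p,q)`. -/
def eotVal {m n : ℕ} (c : Matrix (Fin m) (Fin n) ℝ) (β : ℝ) (p : Fin m → ℝ) (q : Fin n → ℝ) : ℝ :=
  ⨅ π : Gamma p q, eotObj c β π.1

/-- Gibbs kernel `K = e^{-βc}` (entrywise). -/
def gibbs {m n : ℕ} (c : Matrix (Fin m) (Fin n) ℝ) (β : ℝ) : Matrix (Fin m) (Fin n) ℝ :=
  fun i j => Real.exp (-(β * c i j))

/-- Annealed Sinkhorn scaling vectors `(a_t, b_t)`: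
`b_0 = 𝟙`, `a_{t+1} = p ⊘ (K_t b_t)`, `b_{t+1} = q ⊘ (K_{t+1}ᵀ a_{t+1})`, `K_t = e^{-β_t c}`. -/
def sinkAB {m n : ℕ} (p : Fin m → ℝ) (q : Fin n → ℝ) (c : Matrix (Fin m) (Fin n) ℝ)
    (β : ℕ → ℝ) : ℕ → (Fin m → ℝ) × (Fin n → ℝ)
  | 0 => (fun _ => 1, fun _ => 1)
  | t + 1 =>
    let prev := sinkAB p q c β t
    let a : Fin m → ℝ := fun i => p i / ∑ j, gibbs c (β t) i j * prev.2 j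
    (a, fun j => q j / ∑ i, gibbs c (β (t + 1)) i j * a i)

/-- Annealed Sinkhorn primal iterate `π_t = diag(a_t) K_t diag(b_t)`. -/
def sinkPlan {m n : ℕ} (p : Fin m → ℝ) (q : Fin n → ℝ) (c : Matrix (Fin m) (Fin n) ℝ)
    (β : ℕ → ℝ) (t : ℕ) : Matrix (Fin m) (Fin n) ℝ :=
  fun i j => (sinkAB p q c β t).1 i * gibbs c (β t) i j * (sinkAB p q c β t).2 j

/-- `ℓ¹` norm of a vector. -/
def l1vec {k : ℕ} (a : Fin k → ℝ) : ℝ := ∑ i, |a i|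

/-- Oscillation semi-norm `‖c‖_osc = max c - min c`. -/
def cOsc {m n : ℕ} (c : Matrix (Fin m) (Fin n) ℝ) : ℝ :=
  (⨆ i, ⨆ j, c i j) - ⨅ i, ⨅ j, c i j

/-- `‖log p‖_∞`. -/
def logSup {k : ℕ} (p : Fin k → ℝ) : ℝ := ⨆ i, |Real.log (p i)|

/-- The rounding ("projection") procedure of Altschuler et al. (Algorithm 3). -/
def roundPlan {m n : ℕ} (p : Fin m → ℝ) (q : Fin n → ℝ) (π : Matrix (Fin m) (Fin n) ℝ) :
    Matrix (Fin m) (Fin n) ℝ :=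
  let π' : Matrix (Fin m) (Fin n) ℝ := fun i j => min 1 (p i / rowSum π i) * π i j
  let π'' : Matrix (Fin m) (Fin n) ℝ := fun i j => π' i j * min 1 (q j / colSum π' j)
  fun i j => π'' i j +
    (p i - rowSum π'' i) * (q j - colSum π'' j) / l1vec (fun i' => p i' - rowSum π'' i')

/-- Relaxed entropic objective `F^reg(π) = ⟨c,π⟩ + α⁻¹ KL(π𝟙|p) + β⁻¹ KL(π|π^ref)`. -/
def Freg {m n : ℕ} (c : Matrix (Fin m) (Fin n) ℝ) (p : Fin m → ℝ) (α β : ℝ)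
    (π : Matrix (Fin m) (Fin n) ℝ) : ℝ :=
  frob c π + α⁻¹ * KLvec (rowSum π) p + β⁻¹ * KLmat π (piRef m n)

/-- Dual functional for the relaxed entropic problem. -/
def dualFun {m n : ℕ} (p : Fin m → ℝ) (q : Fin n → ℝ) (c : Matrix (Fin m) (Fin n) ℝ)
    (α β : ℝ) (u : Fin m → ℝ) (v : Fin n → ℝ) : ℝ :=
  α⁻¹ * (∑ i, (1 - Real.exp (-(α * u i))) * p i) + ∑ j, v j * q j
    - β⁻¹ * (∑ i, ∑ j, Real.exp (β * (u i + v j - c i j)) * piRef m n i j) + β⁻¹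

/-- Dual functional of entropic OT. -/
def eotDual {m n : ℕ} (p : Fin m → ℝ) (q : Fin n → ℝ) (c : Matrix (Fin m) (Fin n) ℝ)
    (β : ℝ) (u : Fin m → ℝ) (v : Fin n → ℝ) : ℝ :=
  ∑ i, p i * u i + ∑ j, q j * v j
    + β⁻¹ * (1 - ∑ i, ∑ j, piRef m n i j * Real.exp (β * (u i + v j - c i j)))

/-- The set `C_β` of plans of the form `diag(a) e^{-βc} diag(b)` with `a, b ≥ 0`. -/
def scalingSet {m n : ℕ} (c : Matrix (Fin m) (Fin n) ℝ) (β : ℝ) :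
    Set (Matrix (Fin m) (Fin n) ℝ) :=
  {π | ∃ a : Fin m → ℝ, ∃ b : Fin n → ℝ, (∀ i, 0 ≤ a i) ∧ (∀ j, 0 ≤ b j) ∧
    π = fun i j => a i * Real.exp (-(β * c i j)) * b j}


/-- The limiting relaxed functional `F_{α∞,β∞}` (with conventions `1/∞ = 0` and
`(1/0)·KL(·|p) = ι_{p}`), taking values in `EReal`. -/
def Fdoubly {m n : ℕ} (c : Matrix (Fin m) (Fin n) ℝ) (p : Fin m → ℝ)
    (αinf : ℝ) (βinf : ℝ≥0∞) (π : Matrix (Fin m) (Fin n) ℝ) : EReal :=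
  ((frob c π + (βinf⁻¹).toReal * KLmat π (piRef m n) : ℝ) : EReal) +
    (if αinf = 0 then (if rowSum π = p then (0 : EReal) else ⊤)
     else ((αinf⁻¹ * KLvec (rowSum π) p : ℝ) : EReal))

namespace AnnSink

variable {m n : ℕ}

lemma kl_rescale {x y : ℝ} (hx : 0 ≤ x) (hy : 0 < y) :
    x * (Real.log x - Real.log y) - x + y = y * InformationTheory.klFun (x / y) := by
  rw [InformationTheory.klFun_apply]
  rcases hx.eq_or_lt with h | h
  · subst h; simp
  · rw [Real.log_div h.ne' hy.ne']
    field_simp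
    ring

lemma kl_pt {x y : ℝ} (hx : 0 ≤ x) (hy : 0 < y) :
    x - y ≤ x * (Real.log x - Real.log y) := by
  have h := kl_rescale hx hy
  have h2 := mul_nonneg hy.le (InformationTheory.klFun_nonneg (div_nonneg hx hy.le))
  linarith

lemma kl_pt_eq {x y : ℝ} (hx : 0 ≤ x) (hy : 0 < y)
    (h0 : x * (Real.log x - Real.log y) - x + y = 0) : x = y := by
  rw [kl_rescale hx hy] at h0
  rcases mul_eq_zero.1 h0 with h | h
  · exact absurd h hy.ne'
  · rw [InformationTheory.klFun_eq_zero_iff (div_nonneg hx hy.le)] at h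
    field_simp at h
    exact h

lemma mul_log_div {x y : ℝ} (hy : y ≠ 0) :
    x * Real.log (x / y) = x * (Real.log x - Real.log y) := by
  by_cases h : x = 0
  · simp [h]
  · rw [Real.log_div h hy]

lemma KLvec_eq {k : ℕ} (a b : Fin k → ℝ) (hb : ∀ i, 0 < b i) :
    KLvec a b = ∑ i, (a i * (Real.log (a i) - Real.log (b i)) - a i + b i) := by
  unfold KLvec
  refine Finset.sum_congr rfl fun i _ => ?_
  rw [mul_log_div (hb i).ne']

lemma KLvec_nonneg {k : ℕ} (a b : Fin k → ℝ) (ha : ∀ i, 0 ≤ a i) (hb : ∀ i, 0 < b i) :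
    0 ≤ KLvec a b := by
  rw [KLvec_eq a b hb]
  refine Finset.sum_nonneg fun i _ => ?_
  linarith [kl_pt (ha i) (hb i)]

lemma KLvec_self {k : ℕ} (b : Fin k → ℝ) (hb : ∀ i, 0 < b i) : KLvec b b = 0 := by
  rw [KLvec_eq b b hb]; simp

lemma KLvec_eq_zero {k : ℕ} (a b : Fin k → ℝ) (ha : ∀ i, 0 ≤ a i) (hb : ∀ i, 0 < b i)
    (h : KLvec a b ≤ 0) : a = b := by
  have h0 : KLvec a b = 0 := le_antisymm h (KLvec_nonneg a b ha hb)
  rw [KLvec_eq a b hb, Finset.sum_eq_zero_iff_of_nonneg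
    (fun i _ => by linarith [kl_pt (ha i) (hb i)])] at h0
  funext i
  exact kl_pt_eq (ha i) (hb i) (h0 i (Finset.mem_univ i))

/-- Entropy. -/
def Ent (P : Matrix (Fin m) (Fin n) ℝ) : ℝ := ∑ i, ∑ j, P i j * Real.log (P i j)

/-- Cross term. -/
def Cross (P Q : Matrix (Fin m) (Fin n) ℝ) : ℝ := ∑ i, ∑ j, P i j * Real.log (Q i j)

lemma cross_le_ent (P Q : Matrix (Fin m) (Fin n) ℝ) (hP : ∀ i j, 0 ≤ P i j)
    (hQ : ∀ i j, 0 < Q i j) (hm : ∑ i, ∑ j, P i j = ∑ i, ∑ j, Q i j) :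
    Cross P Q ≤ Ent P := by
  have h : ∑ i, ∑ j, (P i j - Q i j) ≤
      ∑ i, ∑ j, (P i j * Real.log (P i j) - P i j * Real.log (Q i j)) := by
    refine Finset.sum_le_sum fun i _ => Finset.sum_le_sum fun j _ => ?_
    rw [← mul_sub]; exact kl_pt (hP i j) (hQ i j)
  simp only [Finset.sum_sub_distrib] at h
  unfold Cross Ent
  linarith

/-- Log-sum inequality. -/
lemma log_sum (P Q : Matrix (Fin m) (Fin n) ℝ) (hP : ∀ i j, 0 < P i j)
    (hQ : ∀ i j, 0 < Q i j) (hn : 0 < n) :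
    ∑ i, rowSum P i * (Real.log (rowSum P i) - Real.log (rowSum Q i)) ≤ Ent P - Cross P Q := by
  unfold Ent Cross
  rw [← Finset.sum_sub_distrib]
  refine Finset.sum_le_sum fun i _ => ?_
  have : Nonempty (Fin n) := ⟨⟨0, hn⟩⟩
  have hp : 0 < rowSum P i := Finset.sum_pos (fun j _ => hP i j) Finset.univ_nonempty
  have hq : 0 < rowSum Q i := Finset.sum_pos (fun j _ => hQ i j) Finset.univ_nonempty
  have h : ∑ j, (P i j - Q i j * (rowSum P i / rowSum Q i)) ≤
      ∑ j, P i j * (Real.log (P i j) - Real.log (Q i j * (rowSum P i / rowSum Q i))) :=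
    Finset.sum_le_sum fun j _ => kl_pt (hP i j).le (mul_pos (hQ i j) (div_pos hp hq))
  have e1 : ∑ j, (P i j - Q i j * (rowSum P i / rowSum Q i)) = 0 := by
    rw [Finset.sum_sub_distrib, ← Finset.sum_mul]
    change rowSum P i - rowSum Q i * (rowSum P i / rowSum Q i) = 0
    field_simp; ring
  have e2 : ∀ j, P i j * (Real.log (P i j) - Real.log (Q i j * (rowSum P i / rowSum Q i)))
      = (P i j * Real.log (P i j) - P i j * Real.log (Q i j))
        - P i j * (Real.log (rowSum P i) - Real.log (rowSum Q i)) := by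
    intro j
    rw [Real.log_mul (hQ i j).ne' (div_pos hp hq).ne', Real.log_div hp.ne' hq.ne']
    ring
  simp only [e1, e2] at h
  rw [Finset.sum_sub_distrib, Finset.sum_sub_distrib, ← Finset.sum_mul] at h
  change 0 ≤ _ - rowSum P i * _ at h
  linarith

lemma lin_sum (c P : Matrix (Fin m) (Fin n) ℝ) (f : Fin m → ℝ) (g : Fin n → ℝ) (s : ℝ) :
    ∑ i, ∑ j, P i j * (f i - s * c i j + g j) =
      ∑ i, rowSum P i * f i - s * frob c P + ∑ j, colSum P j * g j := by
  have : ∀ i j, P i j * (f i - s * c i j + g j)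
      = P i j * f i - s * (c i j * P i j) + P i j * g j := by intros; ring
  simp only [this, Finset.sum_add_distrib, Finset.sum_sub_distrib, ← Finset.mul_sum,
    ← Finset.sum_mul]
  rw [Finset.sum_comm (f := fun i j => P i j * g j)]
  simp only [← Finset.sum_mul]
  rfl

section Sink

variable (p : Fin m → ℝ) (q : Fin n → ℝ) (c : Matrix (Fin m) (Fin n) ℝ) (β : ℕ → ℝ)

lemma sink_pos (hp : ∀ i, 0 < p i) (hq : ∀ j, 0 < q j) (hm : 0 < m) (hn : 0 < n) (t : ℕ) :
    (∀ i, 0 < (sinkAB p q c β t).1 i) ∧ (∀ j, 0 < (sinkAB p q c β t).2 j) := by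
  have : Nonempty (Fin n) := ⟨⟨0, hn⟩⟩
  have : Nonempty (Fin m) := ⟨⟨0, hm⟩⟩
  induction t with
  | zero => simp [sinkAB]
  | succ t ih =>
    have h1 : ∀ i, 0 < (sinkAB p q c β (t+1)).1 i := by
      intro i
      exact div_pos (hp i) (Finset.sum_pos (fun j _ => mul_pos (Real.exp_pos _) (ih.2 j))
        Finset.univ_nonempty)
    refine ⟨h1, fun j => ?_⟩
    exact div_pos (hq j) (Finset.sum_pos (fun i _ => mul_pos (Real.exp_pos _) (h1 i))
        Finset.univ_nonempty)

lemma plan_pos (hp : ∀ i, 0 < p i) (hq : ∀ j, 0 < q j) (hm : 0 < m) (hn : 0 < n) (t : ℕ)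
    (i : Fin m) (j : Fin n) : 0 < sinkPlan p q c β t i j := by
  have h := sink_pos p q c β hp hq hm hn t
  exact mul_pos (mul_pos (h.1 i) (Real.exp_pos _)) (h.2 j)

lemma plan_col (hp : ∀ i, 0 < p i) (hq : ∀ j, 0 < q j) (hm : 0 < m) (hn : 0 < n) (t : ℕ) :
    colSum (sinkPlan p q c β (t+1)) = q := by
  have : Nonempty (Fin m) := ⟨⟨0, hm⟩⟩
  have h := sink_pos p q c β hp hq hm hn (t+1)
  funext j
  have hs : 0 < ∑ i, gibbs c (β (t + 1)) i j * (sinkAB p q c β (t+1)).1 i :=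
    Finset.sum_pos (fun i _ => mul_pos (Real.exp_pos _) (h.1 i)) Finset.univ_nonempty
  have e : (sinkAB p q c β (t+1)).2 j =
    q j / ∑ i, gibbs c (β (t + 1)) i j * (sinkAB p q c β (t+1)).1 i := rfl
  unfold colSum sinkPlan
  rw [← Finset.sum_mul, e]
  simp only [mul_comm (((sinkAB p q c β (t+1)).1 _))]
  field_simp

lemma plan_log (hp : ∀ i, 0 < p i) (hq : ∀ j, 0 < q j) (hm : 0 < m) (hn : 0 < n) (t : ℕ)
    (i : Fin m) (j : Fin n) : Real.log (sinkPlan p q c β t i j) =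
      Real.log ((sinkAB p q c β t).1 i) - β t * c i j + Real.log ((sinkAB p q c β t).2 j) := by
  have h := sink_pos p q c β hp hq hm hn t
  unfold sinkPlan gibbs
  rw [Real.log_mul (mul_pos (h.1 i) (Real.exp_pos _)).ne' (h.2 j).ne',
    Real.log_mul (h.1 i).ne' (Real.exp_pos _).ne', Real.log_exp]
  ring

lemma loga_succ (hp : ∀ i, 0 < p i) (hq : ∀ j, 0 < q j) (hm : 0 < m) (hn : 0 < n) (t : ℕ)
    (i : Fin m) : Real.log ((sinkAB p q c β (t+1)).1 i) = Real.log ((sinkAB p q c β t).1 i)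
      + Real.log (p i) - Real.log (rowSum (sinkPlan p q c β t) i) := by
  have : Nonempty (Fin n) := ⟨⟨0, hn⟩⟩
  have h := sink_pos p q c β hp hq hm hn t
  have hs : 0 < ∑ j, gibbs c (β t) i j * (sinkAB p q c β t).2 j :=
    Finset.sum_pos (fun j _ => mul_pos (Real.exp_pos _) (h.2 j)) Finset.univ_nonempty
  have e : (sinkAB p q c β (t+1)).1 i =
    p i / ∑ j, gibbs c (β t) i j * (sinkAB p q c β t).2 j := rfl
  have e2 : rowSum (sinkPlan p q c β t) i = (sinkAB p q c β t).1 i *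
      ∑ j, gibbs c (β t) i j * (sinkAB p q c β t).2 j := by
    unfold rowSum sinkPlan
    simp only [mul_assoc, ← Finset.mul_sum]
  rw [e, e2, Real.log_div (hp i).ne' hs.ne', Real.log_mul (h.1 i).ne' hs.ne']
  ring

lemma mass_col (P : Matrix (Fin m) (Fin n) ℝ) (h : colSum P = q) :
    ∑ i, ∑ j, P i j = ∑ j, q j := by
  subst h; exact Finset.sum_comm

lemma mass_row (P : Matrix (Fin m) (Fin n) ℝ) :
    ∑ i, rowSum P i = ∑ i, ∑ j, P i j := rfl

/-- The mirror descent inequality. -/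
lemma md_step (hp : ∀ i, 0 < p i) (hq : ∀ j, 0 < q j) (hm : 0 < m) (hn : 0 < n) (t : ℕ)
    (π : Matrix (Fin m) (Fin n) ℝ) (hπ : π ∈ GammaStar (m := m) q) :
    (β (t+2) - β (t+1)) * frob c (sinkPlan p q c β (t+2))
        + KLvec (rowSum (sinkPlan p q c β (t+2))) p ≤
      (β (t+2) - β (t+1)) * frob c π + KLvec (rowSum π) p
        + (Cross π (sinkPlan p q c β (t+2)) - Cross π (sinkPlan p q c β (t+1))) := by
  have : Nonempty (Fin n) := ⟨⟨0, hn⟩⟩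
  set P := sinkPlan p q c β (t+1) with hPdef
  set P' := sinkPlan p q c β (t+2) with hP'def
  have hP : ∀ i j, 0 < P i j := plan_pos p q c β hp hq hm hn (t+1)
  have hP' : ∀ i j, 0 < P' i j := plan_pos p q c β hp hq hm hn (t+2)
  have cP : colSum P = q := plan_col p q c β hp hq hm hn t
  have cP' : colSum P' = q := plan_col p q c β hp hq hm hn (t+1)
  have hr : ∀ i, 0 < rowSum P i := fun i =>
    Finset.sum_pos (fun j _ => hP i j) Finset.univ_nonempty
  obtain ⟨hπ0, hπc⟩ := hπ
  set f : Fin m → ℝ := fun i => Real.log (p i) - Real.log (rowSum P i) with hf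
  set g : Fin n → ℝ := fun j => Real.log ((sinkAB p q c β (t+2)).2 j)
    - Real.log ((sinkAB p q c β (t+1)).2 j) with hg
  have key : ∀ i j, Real.log (P' i j) - Real.log (P i j) =
      f i - (β (t+2) - β (t+1)) * c i j + g j := by
    intro i j
    rw [hPdef, hP'def, plan_log p q c β hp hq hm hn, plan_log p q c β hp hq hm hn,
      loga_succ p q c β hp hq hm hn (t+1)]
    simp only [hf, hg, hPdef]
    ring
  have lin : ∀ R : Matrix (Fin m) (Fin n) ℝ, colSum R = q → Cross R P' - Cross R P =
      ∑ i, rowSum R i * f i - (β (t+2) - β (t+1)) * frob c R + ∑ j, q j * g j := by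
    intro R hR
    have := lin_sum c R f g (β (t+2) - β (t+1))
    rw [hR] at this
    rw [← this]
    unfold Cross
    simp only [← Finset.sum_sub_distrib, ← mul_sub, key]
  have l1 := lin π hπc
  have l2 := lin P' cP'
  have ls := log_sum P' P hP' hP hn
  have e0 : Cross P' P' = Ent P' := rfl
  rw [e0] at l2
  have k1 : 0 ≤ KLvec (rowSum π) (rowSum P) :=
    KLvec_nonneg _ _ (fun i => Finset.sum_nonneg fun j _ => hπ0 i j) hr
  rw [KLvec_eq _ _ hr] at k1
  rw [KLvec_eq _ _ hp, KLvec_eq _ _ hp]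
  have m1 := mass_col q π hπc
  have m2 := mass_col q P' cP'
  have m3 := mass_col q P cP
  rw [← mass_row] at m1 m2 m3
  simp only [hf, mul_sub, Finset.sum_add_distrib, Finset.sum_sub_distrib] at *
  linarith

/-- `π_t` solves an entropic optimal transport problem with its own marginals. -/
lemma eot_opt (hp : ∀ i, 0 < p i) (hq : ∀ j, 0 < q j) (hm : 0 < m) (hn : 0 < n) (t : ℕ)
    (π : Matrix (Fin m) (Fin n) ℝ) (hπ : ∀ i j, 0 ≤ π i j)
    (hr : rowSum π = rowSum (sinkPlan p q c β t)) (hc : colSum π = colSum (sinkPlan p q c β t)) :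
    β t * frob c (sinkPlan p q c β t) + Ent (sinkPlan p q c β t) ≤ β t * frob c π + Ent π := by
  set P := sinkPlan p q c β t with hPdef
  have hP : ∀ i j, 0 < P i j := plan_pos p q c β hp hq hm hn t
  have h := cross_le_ent π P hπ hP (by rw [← mass_row, ← mass_row, hr])
  have lin : ∀ R : Matrix (Fin m) (Fin n) ℝ, Cross R P =
      ∑ i, rowSum R i * Real.log ((sinkAB p q c β t).1 i) - β t * frob c R
        + ∑ j, colSum R j * Real.log ((sinkAB p q c β t).2 j) := by
    intro R
    have := lin_sum c R (fun i => Real.log ((sinkAB p q c β t).1 i))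
      (fun j => Real.log ((sinkAB p q c β t).2 j)) (β t)
    simp only [← plan_log p q c β hp hq hm hn t] at this
    exact this
  have l1 := lin π
  have l2 := lin P
  rw [hr, hc] at l1
  have e0 : Cross P P = Ent P := rfl
  rw [e0] at l2
  linarith

end Sink

lemma KLmat_piRef (hm : 0 < m) (hn : 0 < n) (P : Matrix (Fin m) (Fin n) ℝ)
    (h1 : ∑ i, ∑ j, P i j = 1) :
    KLmat P (piRef m n) = Ent P + Real.log (m * n) := by
  have hm' : (0:ℝ) < m := by exact_mod_cast hm
  have hn' : (0:ℝ) < n := by exact_mod_cast hn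
  have hpos : (0:ℝ) < 1 / (m * n) := by positivity
  unfold KLmat piRef Ent
  have : ∀ i j, P i j * Real.log (P i j / (1 / (m * n))) - P i j + 1 / (m * n) =
      P i j * Real.log (P i j) + P i j * (Real.log (m * n) - 1) + 1 / (m * n) := by
    intro i j
    rw [mul_log_div hpos.ne', one_div, Real.log_inv]
    ring
  simp only [this, Finset.sum_add_distrib, ← Finset.sum_mul, h1]
  simp
  field_simp
  ring

lemma avg_lemma (R D : ℕ → ℝ) (L G : ℝ) (hR : Tendsto R atTop (𝓝 G)) (hD : ∀ s, D s ≤ 0)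
    (h : ∀ s, L ≤ R s + (D (s+1) - D s)) : L ≤ G := by
  by_contra hlt
  push Not at hlt
  have hε : 0 < (L - G) / 2 := by linarith
  obtain ⟨N, hN⟩ := (hR.eventually_lt_const (show G < (L + G) / 2 by linarith)).exists_forall_of_atTop
  have hk : ∀ k : ℕ, D N + k * ((L - G) / 2) ≤ D (N + k) := by
    intro k
    induction k with
    | zero => simp
    | succ k ih =>
      have h1 := h (N + k)
      have h2 := hN (N + k) (by omega)
      rw [← add_assoc]
      push_cast
      linarith
  obtain ⟨k, hk2⟩ := exists_nat_gt (-(D N) / ((L - G) / 2))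
  rw [div_lt_iff₀ hε] at hk2
  linarith [hk k, hD (N + k)]

lemma cont_frob (c : Matrix (Fin m) (Fin n) ℝ) :
    Continuous (fun P : Matrix (Fin m) (Fin n) ℝ => frob c P) := by
  unfold frob; fun_prop

lemma cont_rowSum : Continuous (fun P : Matrix (Fin m) (Fin n) ℝ => rowSum P) := by
  unfold rowSum; fun_prop

lemma cont_colSum : Continuous (fun P : Matrix (Fin m) (Fin n) ℝ => colSum P) := by
  unfold colSum; fun_prop

lemma cont_Ent : Continuous (fun P : Matrix (Fin m) (Fin n) ℝ => Ent P) := by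
  unfold Ent
  refine continuous_finsetSum _ fun i _ => continuous_finsetSum _ fun j _ => ?_
  exact Real.continuous_mul_log.comp (by fun_prop : Continuous fun P : Matrix (Fin m) (Fin n) ℝ => P i j)

lemma cont_KLvec (p : Fin m → ℝ) (hp : ∀ i, 0 < p i) :
    Continuous (fun r : Fin m → ℝ => KLvec r p) := by
  simp only [KLvec_eq _ p hp, mul_sub]
  refine continuous_finsetSum _ fun i _ => ?_
  have := Real.continuous_mul_log.comp (continuous_apply i : Continuous fun r : Fin m → ℝ => r i)
  have h2 : Continuous fun r : Fin m → ℝ => r i * Real.log (r i) := this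
  fun_prop

lemma entry_le_one (q : Fin n → ℝ) (hq : ∑ j, q j = 1) (P : Matrix (Fin m) (Fin n) ℝ)
    (hP : P ∈ GammaStar (m := m) q) (i : Fin m) (j : Fin n) : P i j ≤ 1 := by
  rw [← hq, ← mass_col q P hP.2]
  calc P i j ≤ ∑ j', P i j' :=
        Finset.single_le_sum (f := fun j' => P i j') (fun j' _ => hP.1 i j') (Finset.mem_univ j)
    _ ≤ ∑ i', ∑ j', P i' j' :=
        Finset.single_le_sum (f := fun i' => ∑ j', P i' j')
          (fun i' _ => Finset.sum_nonneg fun j' _ => hP.1 i' j') (Finset.mem_univ i)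

lemma frob_bound (q : Fin n → ℝ) (hq : ∑ j, q j = 1) (c P : Matrix (Fin m) (Fin n) ℝ)
    (hP : P ∈ GammaStar (m := m) q) : 0 ≤ frob c P + ∑ i, ∑ j, |c i j| := by
  unfold frob
  simp only [← Finset.sum_add_distrib]
  refine Finset.sum_nonneg fun i _ => Finset.sum_nonneg fun j _ => ?_
  have h0 := hP.1 i j
  have h1 := entry_le_one q hq P hP i j
  have h2 := abs_nonneg (c i j)
  have h3 := neg_abs_le (c i j)
  nlinarith

/-- Recovery sequence: perturb a plan in `Γ(p,q)` into a plan in `Γ(r,q)`. -/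
def pert (p r : Fin m → ℝ) (q : Fin n → ℝ) (π : Matrix (Fin m) (Fin n) ℝ) (l : ℝ) :
    Matrix (Fin m) (Fin n) ℝ := fun i j => l * π i j + (r i - l * p i) * q j

lemma exists_scale (p : Fin m → ℝ) (hp : ∀ i, 0 < p i) (hm : 0 < m)
    (r : ℕ → Fin m → ℝ) (hr : ∀ k i, 0 ≤ r k i) (hlim : Tendsto r atTop (𝓝 p)) :
    ∃ l : ℕ → ℝ, (∀ k, 0 ≤ l k) ∧ (∀ k i, l k * p i ≤ r k i) ∧ Tendsto l atTop (𝓝 1) := by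
  have : Nonempty (Fin m) := ⟨⟨0, hm⟩⟩
  refine ⟨fun k => Finset.univ.inf' Finset.univ_nonempty fun i => r k i / p i, ?_, ?_, ?_⟩
  · intro k
    exact Finset.le_inf' _ _ fun i _ => div_nonneg (hr k i) (hp i).le
  · intro k i
    rw [← le_div_iff₀ (hp i)]
    exact Finset.inf'_le _ (Finset.mem_univ i)
  · have h : Continuous fun s : Fin m → ℝ =>
        Finset.univ.inf' Finset.univ_nonempty fun i => s i / p i := by
      refine Continuous.finset_inf'_apply _ fun i _ => ?_
      fun_prop
    have := (h.tendsto p).comp hlim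
    have e : (Finset.univ.inf' Finset.univ_nonempty fun i => p i / p i) = (1:ℝ) := by
      simp [div_self (hp _).ne']
    rw [e] at this
    exact this

end AnnSink

open AnnSink
/-- Theorem: Convergence of Annealed Sinkhorn, general form.
For a positive, nondecreasing, concave annealing schedule with `β_t → β_∞ ∈ (0,∞]` and
`α_t = β_t - β_{t-1} → α_∞ ∈ [0,∞)`, the iterates of Annealed Sinkhorn have at least one
accumulation point, and every accumulation point minimizes `F_{α∞,β∞}` over `Γ(*,q)`. -/
theorem annealed_sinkhorn_convergence
    {m n : ℕ} (p : Fin m → ℝ) (q : Fin n → ℝ) (c : Matrix (Fin m) (Fin n) ℝ)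
    (hp : p ∈ simplexPos m) (hq : q ∈ simplexPos n)
    (β : ℕ → ℝ) (hβpos : ∀ t, 0 < β t) (hβmono : Monotone β)
    (hβconc : ∀ t, β (t + 2) - β (t + 1) ≤ β (t + 1) - β t)
    (βinf : ℝ≥0∞) (hβinf : Tendsto (fun t => ENNReal.ofReal (β t)) atTop (𝓝 βinf))
    (αinf : ℝ) (hαinf : Tendsto (fun t => β (t + 1) - β t) atTop (𝓝 αinf)) :
    (∃ πinf, MapClusterPt πinf atTop (sinkPlan p q c β)) ∧
      ∀ πinf, MapClusterPt πinf atTop (sinkPlan p q c β) →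
        πinf ∈ GammaStar q ∧
          ∀ π' ∈ GammaStar (m := m) q, Fdoubly c p αinf βinf πinf ≤ Fdoubly c p αinf βinf π' := by
  obtain ⟨hp0, hp1⟩ := hp
  obtain ⟨hq0, hq1⟩ := hq
  have hm : 0 < m := by
    rcases Nat.eq_zero_or_pos m with h | h
    · subst h; simp at hp1
    · exact h
  have hn : 0 < n := by
    rcases Nat.eq_zero_or_pos n with h | h
    · subst h; simp at hq1
    · exact h
  have hx : ∀ t, sinkPlan p q c β (t+1) ∈ GammaStar (m := m) q := fun t =>
    ⟨fun i j => (plan_pos p q c β hp0 hq0 hm hn (t+1) i j).le, plan_col p q c β hp0 hq0 hm hn t⟩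
  constructor
  · have hK : IsCompact (Set.pi Set.univ fun _ : Fin m => Set.pi Set.univ fun _ : Fin n =>
        Set.Icc (0:ℝ) 1) := isCompact_univ_pi fun _ => isCompact_univ_pi fun _ => isCompact_Icc
    obtain ⟨z, -, hz⟩ := hK.exists_mapClusterPt_of_frequently (l := atTop)
      (f := sinkPlan p q c β) (Eventually.frequently (by
        filter_upwards [eventually_ge_atTop 1] with t ht
        obtain ⟨s, rfl⟩ : ∃ s, t = s + 1 := ⟨t - 1, by omega⟩
        intro i _ j _
        exact ⟨(hx s).1 i j, entry_le_one q hq1 _ (hx s) i j⟩))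
    exact ⟨z, hz⟩
  intro z hz
  obtain ⟨φ, hφ, hlim0⟩ : ∃ φ : ℕ → ℕ, StrictMono φ ∧
      Tendsto (sinkPlan p q c β ∘ φ) atTop (𝓝 z) :=
    TopologicalSpace.FirstCountableTopology.tendsto_subseq (α := Fin m → Fin n → ℝ) hz
  obtain ⟨ψ, hψ, hlim⟩ : ∃ ψ : ℕ → ℕ, Tendsto ψ atTop atTop ∧
      Tendsto (fun k => sinkPlan p q c β (ψ k + 1)) atTop (𝓝 z) := by
    refine ⟨fun k => φ (k+1) - 1, ?_, ?_⟩
    · refine tendsto_atTop_mono (fun k => ?_) tendsto_id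
      have := hφ.le_apply (x := k+1)
      simp only [id]; omega
    · have h1 := hlim0.comp (tendsto_add_atTop_nat 1)
      refine h1.congr fun k => ?_
      have := hφ.le_apply (x := k+1)
      simp only [Function.comp]
      rw [Nat.sub_add_cancel (by omega)]
  have hfrob := ((cont_frob c).tendsto z).comp hlim
  have hrow := (cont_rowSum.tendsto z).comp hlim
  have hcol := (cont_colSum.tendsto z).comp hlim
  have hent := (cont_Ent.tendsto z).comp hlim
  have hkl := ((cont_KLvec p hp0).tendsto _).comp hrow
  simp only [Function.comp_def] at hfrob hrow hcol hent hkl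
  have hzmem : z ∈ GammaStar (m := m) q := by
    constructor
    · intro i j
      have h1 : Tendsto (fun k => sinkPlan p q c β (ψ k + 1) i j) atTop (𝓝 (z i j)) :=
        tendsto_pi_nhds.1 (tendsto_pi_nhds.1 hlim i) j
      exact ge_of_tendsto' h1 fun k => (hx _).1 i j
    · refine tendsto_nhds_unique hcol ?_
      simp only [(hx _).2]
      exact tendsto_const_nhds
  refine ⟨hzmem, fun π' hπ' => ?_⟩
  have hmass : ∀ P ∈ GammaStar (m := m) q, ∑ i, ∑ j, P i j = 1 := fun P hP => by
    rw [mass_col q P hP.2, hq1]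
  have hα0 : 0 ≤ αinf := ge_of_tendsto' hαinf fun t => sub_nonneg.2 (hβmono (Nat.le_succ t))
  -- the inverse temperatures
  obtain ⟨b, hbdef⟩ : ∃ b, b = (βinf⁻¹).toReal := ⟨_, rfl⟩
  have hb : Tendsto (fun t => (β t)⁻¹) atTop (𝓝 b) := by
    have hne : βinf ≠ 0 := by
      have h1 : ENNReal.ofReal (β 0) ≤ βinf := ge_of_tendsto' hβinf fun t =>
        ENNReal.ofReal_le_ofReal (hβmono (Nat.zero_le t))
      exact (lt_of_lt_of_le (ENNReal.ofReal_pos.2 (hβpos 0)) h1).ne'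
    have h1 := (ENNReal.tendsto_toReal (ENNReal.inv_ne_top.2 hne)).comp
      ((continuous_inv.tendsto βinf).comp hβinf)
    rw [hbdef]
    refine h1.congr fun t => ?_
    simp [ENNReal.toReal_inv, ENNReal.toReal_ofReal (hβpos t).le]
  -- the monotone quantity
  set C : ℝ := ∑ i, ∑ j, |c i j| with hC
  have hFb : ∀ P ∈ GammaStar (m := m) q, 0 ≤ frob c P + C := fun P hP => frob_bound q hq1 c P hP
  set H : ℕ → ℝ := fun s => KLvec (rowSum (sinkPlan p q c β (s+1))) p
    + (β (s+1) - β s) * (frob c (sinkPlan p q c β (s+1)) + C) with hH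
  have hanti : Antitone H := by
    refine antitone_nat_of_succ_le fun s => ?_
    have h1 := md_step p q c β hp0 hq0 hm hn s _ (hx s)
    have h2 := cross_le_ent (sinkPlan p q c β (s+1)) (sinkPlan p q c β (s+2)) (hx s).1
      (plan_pos p q c β hp0 hq0 hm hn (s+2)) (by rw [hmass _ (hx s), hmass _ (hx (s+1))])
    have e0 : Cross (sinkPlan p q c β (s+1)) (sinkPlan p q c β (s+1))
      = Ent (sinkPlan p q c β (s+1)) := rfl
    rw [e0] at h1
    have h3 := mul_le_mul_of_nonneg_right (hβconc s) (hFb _ (hx s))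
    simp only [hH, show s + 1 + 1 = s + 2 from rfl]
    linarith
  set L : ℝ := KLvec (rowSum z) p + αinf * (frob c z + C) with hL
  have hHlim : Tendsto (fun k => H (ψ k)) atTop (𝓝 L) :=
    hkl.add ((hαinf.comp hψ).mul (hfrob.add_const C))
  have hLH : ∀ s, L ≤ H s := fun s => by
    refine le_of_tendsto hHlim ?_
    filter_upwards [hψ.eventually_ge_atTop s] with k hk
    exact hanti hk
  have hmain : ∀ P ∈ GammaStar (m := m) q, L ≤ KLvec (rowSum P) p + αinf * (frob c P + C) := by
    intro P hP
    refine avg_lemma (fun s => KLvec (rowSum P) p + (β (s+2) - β (s+1)) * (frob c P + C))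
      (fun s => Cross P (sinkPlan p q c β (s+1))) _ _ ?_ ?_ ?_
    · exact tendsto_const_nhds.add ((hαinf.comp (tendsto_add_atTop_nat 1)).mul_const _)
    · intro s
      refine Finset.sum_nonpos fun i _ => Finset.sum_nonpos fun j _ => ?_
      exact mul_nonpos_of_nonneg_of_nonpos (hP.1 i j)
        (Real.log_nonpos ((hx s).1 i j) (entry_le_one q hq1 _ (hx s) i j))
    · intro s
      have h1 := md_step p q c β hp0 hq0 hm hn s P hP
      have h2 := hLH (s+1)
      simp only [hH, show s + 1 + 1 = s + 2 from rfl] at h2 ⊢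
      linarith
  unfold Fdoubly
  rw [← hbdef]
  by_cases hα : αinf = 0
  · -- vanishing steps: the limit has the right marginal
    have hzrow : rowSum z = p := by
      have hind : (fun i j => p i * q j : Matrix (Fin m) (Fin n) ℝ) ∈ GammaStar (m := m) q := by
        refine ⟨fun i j => (mul_pos (hp0 i) (hq0 j)).le, ?_⟩
        funext j
        simp only [colSum, ← Finset.sum_mul, hp1, one_mul]
      have h1 := hmain _ hind
      have e : rowSum (fun i j => p i * q j : Matrix (Fin m) (Fin n) ℝ) = p := by
        funext i
        simp only [rowSum, ← Finset.mul_sum, hq1, mul_one]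
      rw [e, KLvec_self p hp0, hL, hα] at h1
      refine KLvec_eq_zero _ _ (fun i => Finset.sum_nonneg fun j _ => hzmem.1 i j) hp0 ?_
      linarith
    simp only [hα, if_true, hzrow]
    by_cases hπr : rowSum π' = p
    · simp only [hπr, if_true, add_zero]
      rw [EReal.coe_le_coe_iff, KLmat_piRef hm hn _ (hmass _ hzmem),
        KLmat_piRef hm hn _ (hmass _ hπ')]
      rw [hzrow] at hrow
      obtain ⟨l, hl0, hlr, hl1⟩ := exists_scale p hp0 hm
        (fun k => rowSum (sinkPlan p q c β (ψ k + 1)))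
        (fun k i => Finset.sum_nonneg fun j _ => (hx _).1 i j) hrow
      set Q : ℕ → Matrix (Fin m) (Fin n) ℝ := fun k =>
        pert p (rowSum (sinkPlan p q c β (ψ k + 1))) q π' (l k) with hQ
      have hQlim : Tendsto Q atTop (𝓝 π') := by
        refine tendsto_pi_nhds.2 fun i => tendsto_pi_nhds.2 fun j => ?_
        have h1 := (hl1.mul_const (π' i j)).add
          (((tendsto_pi_nhds.1 hrow i).sub (hl1.mul_const (p i))).mul_const (q j))
        simp only [one_mul, sub_self, zero_mul, add_zero] at h1
        exact h1
      have hQopt : ∀ k, frob c (sinkPlan p q c β (ψ k + 1))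
          + (β (ψ k + 1))⁻¹ * Ent (sinkPlan p q c β (ψ k + 1)) ≤
          frob c (Q k) + (β (ψ k + 1))⁻¹ * Ent (Q k) := by
        intro k
        have h1 := eot_opt p q c β hp0 hq0 hm hn (ψ k + 1) (Q k) (fun i j => by
            have := mul_nonneg (hl0 k) (hπ'.1 i j)
            have := mul_nonneg (sub_nonneg.2 (hlr k i)) (hq0 j).le
            simp only [hQ, pert]
            linarith) (by
            funext i
            have e : ∑ j, π' i j = p i := congrFun hπr i
            change ∑ j, (l k * π' i j + (rowSum (sinkPlan p q c β (ψ k + 1)) i - l k * p i) * q j)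
              = _
            rw [Finset.sum_add_distrib, ← Finset.mul_sum, ← Finset.mul_sum, e, hq1]
            ring) (by
            rw [(hx _).2]
            funext j
            have e : ∑ i, π' i j = q j := congrFun hπ'.2 j
            change ∑ i, (l k * π' i j + (rowSum (sinkPlan p q c β (ψ k + 1)) i - l k * p i) * q j)
              = _
            rw [Finset.sum_add_distrib, ← Finset.mul_sum, ← Finset.sum_mul,
              Finset.sum_sub_distrib, ← Finset.mul_sum, e, hp1, mass_row, hmass _ (hx _)]
            ring)
        have h2 := hβpos (ψ k + 1)
        have h3 := mul_le_mul_of_nonneg_left h1 (inv_pos.2 h2).le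
        simp only [mul_add, inv_mul_cancel_left₀ h2.ne'] at h3
        exact h3
      have hbψ := hb.comp ((tendsto_add_atTop_nat 1).comp hψ)
      simp only [Function.comp_def] at hbψ
      have t1 := hfrob.add (hbψ.mul hent)
      have t2 := (((cont_frob c).tendsto π').comp hQlim).add
        (hbψ.mul ((cont_Ent.tendsto π').comp hQlim))
      have h4 := le_of_tendsto_of_tendsto' t1 t2 hQopt
      linarith
    · simp only [hπr, if_false]
      rw [EReal.coe_add_top]
      exact le_top
  · have hαpos : 0 < αinf := lt_of_le_of_ne hα0 (Ne.symm hα)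
    have hb0 : b = 0 := by
      by_contra hne
      have h1 : Tendsto β atTop (𝓝 b⁻¹) := by
        have := hb.inv₀ hne
        simpa using this
      have h2 := (h1.comp (tendsto_add_atTop_nat 1)).sub h1
      rw [sub_self] at h2
      exact hα (tendsto_nhds_unique hαinf h2)
    simp only [hα, if_false, hb0, zero_mul, add_zero]
    rw [← EReal.coe_add, ← EReal.coe_add, EReal.coe_le_coe_iff]
    have h1 := mul_le_mul_of_nonneg_left (hmain π' hπ') (inv_pos.2 hαpos).le
    simp only [hL, mul_add, inv_mul_cancel_left₀ hα] at h1
    linarith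

end
end

section
/- Let p ∈ Δ*_m, q ∈ Δ*_n, c ∈ ℝ^{m×n}, and let (β_t)_{t≥0} be a positive, nondecreasing, concave annealing schedule such that β_t → +∞ and α_t = β_t − β_{t−1} → 0. Let (π_t) be the sequence generated by Annealed Sinkhorn. Then every accumulation point of (π_t) is an optimal transport plan, i.e. a minimizer of ⟨c,π⟩ over Γ(p,q). -/
open Finset Filter Topology ENNReal

noncomputable section

lemma aux_mass {m n : ℕ} (P : Fin m → Fin n → ℝ) (q : Fin n → ℝ)
    (h : ∀ j, ∑ i, P i j = q j) (hq1 : ∑ j, q j = 1) : ∑ i, ∑ j, P i j = 1 := by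
  rw [Finset.sum_comm, ← hq1]
  exact Finset.sum_congr rfl fun j _ => h j

lemma aux_kl_term {x y : ℝ} (hx : 0 < x) (hy : 0 < y) :
    x - y ≤ x * (Real.log x - Real.log y) := by
  have h := Real.log_le_sub_one_of_pos (div_pos hy hx)
  rw [Real.log_div hy.ne' hx.ne'] at h
  have h2 := mul_le_mul_of_nonneg_left h hx.le
  have h3 : x * (y / x - 1) = y - x := by field_simp
  rw [h3] at h2
  linarith

lemma aux_kl2 {m n : ℕ} (x y : Fin m → Fin n → ℝ) (hx : ∀ i j, 0 < x i j)
    (hy : ∀ i j, 0 < y i j) (h : ∑ i, ∑ j, x i j = ∑ i, ∑ j, y i j) :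
    0 ≤ ∑ i, ∑ j, x i j * (Real.log (x i j) - Real.log (y i j)) := by
  have h1 : ∑ i, ∑ j, (x i j - y i j) ≤
      ∑ i, ∑ j, x i j * (Real.log (x i j) - Real.log (y i j)) :=
    Finset.sum_le_sum fun i _ => Finset.sum_le_sum fun j _ => aux_kl_term (hx i j) (hy i j)
  simp only [Finset.sum_sub_distrib] at h1
  linarith

lemma aux_kl1 {m : ℕ} (x y : Fin m → ℝ) (hx : ∀ i, 0 < x i)
    (hy : ∀ i, 0 < y i) (h : ∑ i, x i = ∑ i, y i) :
    0 ≤ ∑ i, x i * (Real.log (x i) - Real.log (y i)) := by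
  have h1 : ∑ i, (x i - y i) ≤ ∑ i, x i * (Real.log (x i) - Real.log (y i)) :=
    Finset.sum_le_sum fun i _ => aux_kl_term (hx i) (hy i)
  simp only [Finset.sum_sub_distrib] at h1
  linarith

lemma aux_key {m n : ℕ} (σ d L : Fin m → Fin n → ℝ) (w : Fin m → ℝ) (q v : Fin n → ℝ) (α : ℝ)
    (hcol : ∀ j, ∑ i, σ i j = q j) (hL : ∀ i j, L i j = w i - α * d i j + v j) :
    ∑ i, ∑ j, σ i j * L i j =
      ∑ i, (∑ j, σ i j) * w i - α * (∑ i, ∑ j, d i j * σ i j) + ∑ j, q j * v j := by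
  have e1 : ∑ i, ∑ j, σ i j * v j = ∑ j, q j * v j := by
    rw [Finset.sum_comm]
    exact Finset.sum_congr rfl fun j _ => by rw [← Finset.sum_mul, hcol]
  rw [← e1, Finset.mul_sum, ← Finset.sum_sub_distrib, ← Finset.sum_add_distrib]
  refine Finset.sum_congr rfl fun i _ => ?_
  rw [Finset.sum_mul, Finset.mul_sum, ← Finset.sum_sub_distrib, ← Finset.sum_add_distrib]
  refine Finset.sum_congr rfl fun j _ => ?_
  rw [hL]; ring

lemma aux_step {m n : ℕ} (hn : 0 < n) (P P' d : Fin m → Fin n → ℝ) (p : Fin m → ℝ)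
    (q v : Fin n → ℝ) (α : ℝ)
    (hP : ∀ i j, 0 < P i j) (hP' : ∀ i j, 0 < P' i j)
    (hp : ∀ i, 0 < p i) (hpq : ∑ i, p i = ∑ j, q j)
    (hc : ∀ j, ∑ i, P i j = q j) (hc' : ∀ j, ∑ i, P' i j = q j)
    (hL : ∀ i j, Real.log (P' i j) - Real.log (P i j) =
      (Real.log (p i) - Real.log (∑ j, P i j)) - α * d i j + v j) :
    (∑ i, (∑ j, P' i j) * (Real.log (∑ j, P' i j) - Real.log (p i))
        + α * (∑ i, ∑ j, d i j * P' i j) ≤ ∑ j, q j * v j) ∧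
    (∑ j, q j * v j ≤ ∑ i, (∑ j, P i j) * (Real.log (∑ j, P i j) - Real.log (p i))
        + α * (∑ i, ∑ j, d i j * P i j)) ∧
    (∀ σ : Fin m → Fin n → ℝ, (∀ i, ∑ j, σ i j = p i) → (∀ j, ∑ i, σ i j = q j) →
      ∑ j, q j * v j ≤ α * (∑ i, ∑ j, d i j * σ i j) +
        ∑ i, ∑ j, σ i j * Real.log (P' i j) - ∑ i, ∑ j, σ i j * Real.log (P i j)) := by
  have : Nonempty (Fin n) := ⟨⟨0, hn⟩⟩
  have hr : ∀ i, 0 < ∑ j, P i j := fun i =>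
    Finset.sum_pos (fun j _ => hP i j) Finset.univ_nonempty
  have hr' : ∀ i, 0 < ∑ j, P' i j := fun i =>
    Finset.sum_pos (fun j _ => hP' i j) Finset.univ_nonempty
  have hm : ∑ i, ∑ j, P i j = ∑ j, q j := by
    rw [Finset.sum_comm]; exact Finset.sum_congr rfl fun j _ => hc j
  have hm' : ∑ i, ∑ j, P' i j = ∑ j, q j := by
    rw [Finset.sum_comm]; exact Finset.sum_congr rfl fun j _ => hc' j
  refine ⟨?_, ?_, ?_⟩
  · have k := aux_key P' d _ _ q v α hc' hL
    have g := aux_kl2 P' (fun i j => P i j * ((∑ j, P' i j) / (∑ j, P i j))) hP'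
      (fun i j => mul_pos (hP i j) (div_pos (hr' i) (hr i))) (by
        refine Finset.sum_congr rfl fun i _ => ?_
        rw [← Finset.sum_mul, mul_div_cancel₀ _ (hr i).ne'])
    have e : ∑ i, ∑ j, P' i j * (Real.log (P' i j) -
        Real.log (P i j * ((∑ j, P' i j) / (∑ j, P i j)))) =
        ∑ i, ∑ j, P' i j * (Real.log (P' i j) - Real.log (P i j)) -
        ∑ i, (∑ j, P' i j) * (Real.log (∑ j, P' i j) - Real.log (∑ j, P i j)) := by
      rw [← Finset.sum_sub_distrib]
      refine Finset.sum_congr rfl fun i _ => ?_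
      rw [Finset.sum_mul, ← Finset.sum_sub_distrib]
      refine Finset.sum_congr rfl fun j _ => ?_
      rw [Real.log_mul (hP i j).ne' (div_pos (hr' i) (hr i)).ne',
        Real.log_div (hr' i).ne' (hr i).ne']
      ring
    rw [e, k] at g
    simp only [mul_sub, Finset.sum_sub_distrib] at g ⊢
    linarith
  · have k := aux_key P d _ _ q v α hc hL
    have g := aux_kl2 P P' hP hP' (by rw [hm, hm'])
    simp only [mul_sub, Finset.sum_sub_distrib] at g k ⊢
    linarith
  · intro σ hσr hσc
    have k := aux_key σ d _ _ q v α hσc hL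
    have g := aux_kl1 p (fun i => ∑ j, P i j) hp hr (by rw [hm, hpq])
    simp only [hσr, mul_sub, Finset.sum_sub_distrib] at g k ⊢
    linarith

section sink
variable {m n : ℕ} (p : Fin m → ℝ) (q : Fin n → ℝ) (c : Matrix (Fin m) (Fin n) ℝ) (β : ℕ → ℝ)

lemma aux_gibbs_pos (b : ℝ) (i : Fin m) (j : Fin n) : 0 < gibbs c b i j := Real.exp_pos _

lemma aux_pos (hm : 0 < m) (hn : 0 < n) (hp : ∀ i, 0 < p i) (hq : ∀ j, 0 < q j) (t : ℕ) :
    (∀ i, 0 < (sinkAB p q c β t).1 i) ∧ ∀ j, 0 < (sinkAB p q c β t).2 j := by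
  have : Nonempty (Fin n) := ⟨⟨0, hn⟩⟩
  have : Nonempty (Fin m) := ⟨⟨0, hm⟩⟩
  induction t with
  | zero => simp [sinkAB]
  | succ t ih =>
    have h1 : ∀ i, 0 < (sinkAB p q c β (t + 1)).1 i := fun i =>
      div_pos (hp i) (Finset.sum_pos (fun j _ => mul_pos (aux_gibbs_pos c _ i j) (ih.2 j))
        Finset.univ_nonempty)
    refine ⟨h1, fun j => ?_⟩
    exact div_pos (hq j) (Finset.sum_pos (fun i _ => mul_pos (aux_gibbs_pos c _ i j) (h1 i))
        Finset.univ_nonempty)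

lemma aux_col (hm : 0 < m) (hn : 0 < n) (hp : ∀ i, 0 < p i) (hq : ∀ j, 0 < q j) (t : ℕ) (j : Fin n) :
    ∑ i, sinkPlan p q c β (t + 1) i j = q j := by
  have : Nonempty (Fin m) := ⟨⟨0, hm⟩⟩
  have h := aux_pos p q c β hm hn hp hq (t + 1)
  have hb : (sinkAB p q c β (t + 1)).2 j =
    q j / ∑ i, gibbs c (β (t + 1)) i j * (sinkAB p q c β (t + 1)).1 i := rfl
  have hs : 0 < ∑ i, gibbs c (β (t + 1)) i j * (sinkAB p q c β (t + 1)).1 i :=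
    Finset.sum_pos (fun i _ => mul_pos (aux_gibbs_pos c _ i j) (h.1 i)) Finset.univ_nonempty
  unfold sinkPlan
  rw [← Finset.sum_mul, hb]
  simp only [mul_comm ((sinkAB p q c β (t + 1)).1 _)]
  field_simp

lemma aux_log (hm : 0 < m) (hn : 0 < n) (hp : ∀ i, 0 < p i) (hq : ∀ j, 0 < q j) (t : ℕ)
    (i : Fin m) (j : Fin n) : Real.log (sinkPlan p q c β t i j) =
      Real.log ((sinkAB p q c β t).1 i) - β t * c i j + Real.log ((sinkAB p q c β t).2 j) := by
  have h := aux_pos p q c β hm hn hp hq t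
  unfold sinkPlan
  rw [Real.log_mul (mul_pos (h.1 i) (aux_gibbs_pos c _ i j)).ne' (h.2 j).ne',
    Real.log_mul (h.1 i).ne' (aux_gibbs_pos c _ i j).ne', gibbs, Real.log_exp]
  ring

lemma aux_loga (hm : 0 < m) (hn : 0 < n) (hp : ∀ i, 0 < p i) (hq : ∀ j, 0 < q j) (t : ℕ)
    (i : Fin m) : Real.log ((sinkAB p q c β (t + 1)).1 i) =
      Real.log (p i) - Real.log (∑ j, sinkPlan p q c β t i j)
        + Real.log ((sinkAB p q c β t).1 i) := by
  have : Nonempty (Fin n) := ⟨⟨0, hn⟩⟩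
  have h := aux_pos p q c β hm hn hp hq t
  have hs : 0 < ∑ j, gibbs c (β t) i j * (sinkAB p q c β t).2 j :=
    Finset.sum_pos (fun j _ => mul_pos (aux_gibbs_pos c _ i j) (h.2 j)) Finset.univ_nonempty
  have ha : (sinkAB p q c β (t + 1)).1 i =
    p i / ∑ j, gibbs c (β t) i j * (sinkAB p q c β t).2 j := rfl
  have e : ∑ j, sinkPlan p q c β t i j =
      (sinkAB p q c β t).1 i * ∑ j, gibbs c (β t) i j * (sinkAB p q c β t).2 j := by
    rw [Finset.mul_sum]
    exact Finset.sum_congr rfl fun j _ => by unfold sinkPlan; ring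
  rw [ha, e, Real.log_div (hp i).ne' hs.ne', Real.log_mul (h.1 i).ne' hs.ne']
  ring

lemma aux_osc (hm : 0 < m) (hn : 0 < n) (hp : ∀ i, 0 < p i) (hq : ∀ j, 0 < q j)
    (hβ : ∀ t, 0 < β t) (M : ℝ) (hM : ∀ i j, |c i j| ≤ M) (t : ℕ) (i k : Fin m) :
    Real.log ((sinkAB p q c β (t + 1)).1 i) - Real.log ((sinkAB p q c β (t + 1)).1 k) ≤
      Real.log (p i) - Real.log (p k) + β t * (2 * M) := by
  have : Nonempty (Fin n) := ⟨⟨0, hn⟩⟩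
  have h := aux_pos p q c β hm hn hp hq t
  have hs : ∀ i, 0 < ∑ j, gibbs c (β t) i j * (sinkAB p q c β t).2 j := fun i =>
    Finset.sum_pos (fun j _ => mul_pos (aux_gibbs_pos c _ i j) (h.2 j)) Finset.univ_nonempty
  have ha : ∀ i, Real.log ((sinkAB p q c β (t + 1)).1 i) =
    Real.log (p i) - Real.log (∑ j, gibbs c (β t) i j * (sinkAB p q c β t).2 j) := fun i => by
    rw [← Real.log_div (hp i).ne' (hs i).ne']; rfl
  have hle : ∑ j, gibbs c (β t) k j * (sinkAB p q c β t).2 j ≤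
      Real.exp (β t * (2 * M)) * ∑ j, gibbs c (β t) i j * (sinkAB p q c β t).2 j := by
    rw [Finset.mul_sum]
    refine Finset.sum_le_sum fun j _ => ?_
    rw [← mul_assoc]
    refine mul_le_mul_of_nonneg_right ?_ (h.2 j).le
    unfold gibbs
    rw [← Real.exp_add]
    apply Real.exp_le_exp.2
    have h1 := (abs_le.1 (hM k j)).1
    have h2 := (abs_le.1 (hM i j)).2
    nlinarith [hβ t]
  have := Real.log_le_log (hs k) hle
  rw [Real.log_mul (Real.exp_pos _).ne' (hs i).ne', Real.log_exp] at this
  rw [ha, ha]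
  linarith

end sink

lemma aux_hell {x y : ℝ} (hx : 0 < x) (hy : 0 < y) :
    (√x - √y) ^ 2 ≤ x * (Real.log x - Real.log y) - x + y := by
  have h := aux_kl_term (Real.sqrt_pos.2 hx) (Real.sqrt_pos.2 hy)
  rw [Real.log_sqrt hx.le, Real.log_sqrt hy.le] at h
  have h2 := mul_le_mul_of_nonneg_left h (Real.sqrt_nonneg x)
  have e1 := Real.mul_self_sqrt hx.le
  have e2 := Real.mul_self_sqrt hy.le
  have h3 : √x * (√x * (Real.log x / 2 - Real.log y / 2)) = x * (Real.log x - Real.log y) / 2 := by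
    rw [← mul_assoc, e1]; ring
  rw [h3] at h2
  nlinarith

lemma aux_seq (S α L : ℕ → ℝ) (D : ℝ) (hS : Antitone S) (hα : Tendsto α atTop (𝓝 0))
    (hL : ∀ t, L t ≤ 0) (h : ∀ t, S t ≤ α t * D + L (t + 1) - L t) :
    ∃ u : ℕ → ℝ, Tendsto u atTop (𝓝 0) ∧ ∀ t, S t ≤ u t := by
  refine ⟨fun t => (((t + 1 : ℕ) : ℝ)⁻¹ * ∑ k ∈ Finset.range (t + 1), α k) * D
    + ((t + 1 : ℕ) : ℝ)⁻¹ * (- L 0), ?_, ?_⟩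
  · have h1 := (tendsto_add_atTop_iff_nat 1).2 hα.cesaro
    have h2 := (tendsto_add_atTop_iff_nat 1).2 (tendsto_inv_atTop_nhds_zero_nat (𝕜 := ℝ))
    simpa using (h1.mul_const D).add (h2.mul_const (- L 0))
  · intro t
    have h1 : ∀ T, ∑ k ∈ Finset.range T, S k ≤ (∑ k ∈ Finset.range T, α k) * D + L T - L 0 := by
      intro T
      induction T with
      | zero => simp
      | succ T ih =>
        rw [Finset.sum_range_succ, Finset.sum_range_succ]
        have := h T
        linarith
    have h2 : ((t + 1 : ℕ) : ℝ) * S t ≤ ∑ k ∈ Finset.range (t + 1), S k := by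
      have := Finset.card_nsmul_le_sum (Finset.range (t + 1)) S (S t) (fun k hk =>
        hS (Nat.lt_succ_iff.1 (Finset.mem_range.1 hk)))
      simpa using this
    have h3 := h1 (t + 1)
    have h4 := hL (t + 1)
    have hpos : (0 : ℝ) < ((t + 1 : ℕ) : ℝ) := by positivity
    have h5 : ((t + 1 : ℕ) : ℝ) * S t ≤ (∑ k ∈ Finset.range (t + 1), α k) * D - L 0 := by linarith
    have h6 := mul_le_mul_of_nonneg_left h5 (inv_pos.2 hpos).le
    rw [inv_mul_cancel_left₀ hpos.ne'] at h6
    linarith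

lemma aux_row {m n : ℕ} (p : Fin m → ℝ) (q : Fin n → ℝ) (c : Matrix (Fin m) (Fin n) ℝ)
    (hm : 0 < m) (hn : 0 < n) (hp : ∀ i, 0 < p i) (hq : ∀ j, 0 < q j)
    (hp1 : ∑ i, p i = 1) (hq1 : ∑ j, q j = 1)
    (β : ℕ → ℝ) (hβmono : Monotone β)
    (hβconc : ∀ t, β (t + 2) - β (t + 1) ≤ β (t + 1) - β t)
    (hα0 : Tendsto (fun t => β (t + 1) - β t) atTop (𝓝 0))
    (M : ℝ) (hM : ∀ i j, |c i j| ≤ M) (i : Fin m) :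
    Tendsto (fun t => ∑ j, sinkPlan p q c β t i j) atTop (𝓝 (p i)) := by
  have : Nonempty (Fin n) := ⟨⟨0, hn⟩⟩
  have hpos : ∀ t i j, 0 < sinkPlan p q c β t i j := fun t i j => by
    have h := aux_pos p q c β hm hn hp hq t
    exact mul_pos (mul_pos (h.1 i) (aux_gibbs_pos c _ i j)) (h.2 j)
  have hcol := aux_col p q c β hm hn hp hq
  have hstep := fun t => aux_step hn (sinkPlan p q c β (t + 1)) (sinkPlan p q c β (t + 2))
    (fun i j => c i j + M) p q (fun j => Real.log ((sinkAB p q c β (t + 2)).2 j)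
      - Real.log ((sinkAB p q c β (t + 1)).2 j) + (β (t + 2) - β (t + 1)) * M)
    (β (t + 2) - β (t + 1)) (hpos _) (hpos _) hp (hp1.trans hq1.symm) (hcol t) (hcol (t + 1))
    (fun i j => by
      rw [aux_log p q c β hm hn hp hq, aux_log p q c β hm hn hp hq,
        aux_loga p q c β hm hn hp hq (t + 1)]
      ring)
  set S : ℕ → ℝ := fun t => ∑ j, q j * (Real.log ((sinkAB p q c β (t + 2)).2 j)
      - Real.log ((sinkAB p q c β (t + 1)).2 j) + (β (t + 2) - β (t + 1)) * M) with hSdef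
  have hD : ∀ t, 0 ≤ ∑ i, ∑ j, (c i j + M) * sinkPlan p q c β t i j := fun t =>
    Finset.sum_nonneg fun i _ => Finset.sum_nonneg fun j _ =>
      mul_nonneg (by have := (abs_le.1 (hM i j)).1; linarith) (hpos t i j).le
  have hSanti : Antitone S := by
    refine antitone_nat_of_succ_le fun t => ?_
    have h1 := (hstep t).1
    have h2 := (hstep (t + 1)).2.1
    have h3 := mul_le_mul_of_nonneg_right (hβconc (t + 1)) (hD (t + 2))
    exact h2.trans (le_trans (add_le_add le_rfl h3) h1)
  have hle1 : ∀ t i j, sinkPlan p q c β (t + 1) i j ≤ 1 := fun t i j => by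
    have h1 : sinkPlan p q c β (t + 1) i j ≤ q j := by
      rw [← hcol t j]
      exact Finset.single_le_sum (f := fun i => sinkPlan p q c β (t + 1) i j)
        (fun i _ => (hpos _ i j).le) (Finset.mem_univ i)
    have h2 : q j ≤ 1 := by
      rw [← hq1]
      exact Finset.single_le_sum (fun i _ => (hq i).le) (Finset.mem_univ j)
    exact h1.trans h2
  obtain ⟨u, hu0, hu⟩ := aux_seq S (fun t => β (t + 2) - β (t + 1))
    (fun t => ∑ i, ∑ j, p i * q j * Real.log (sinkPlan p q c β (t + 1) i j))
    (∑ i, ∑ j, (c i j + M) * (p i * q j)) hSanti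
    ((tendsto_add_atTop_iff_nat 1).2 hα0)
    (fun t => Finset.sum_nonpos fun i _ => Finset.sum_nonpos fun j _ =>
      mul_nonpos_of_nonneg_of_nonpos (mul_pos (hp i) (hq j)).le
        (Real.log_nonpos (hpos _ i j).le (hle1 t i j)))
    (fun t => (hstep t).2.2 (fun i j => p i * q j)
      (fun i => by rw [← Finset.mul_sum, hq1, mul_one])
      (fun j => by rw [← Finset.sum_mul, hp1, one_mul]))
  have hr : ∀ t i, 0 < ∑ j, sinkPlan p q c β t i j := fun t i =>
    Finset.sum_pos (fun j _ => hpos t i j) Finset.univ_nonempty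
  have hbound : ∀ t, (√(∑ j, sinkPlan p q c β (t + 2) i j) - √(p i)) ^ 2 ≤ u t := by
    intro t
    have h1 : (√(∑ j, sinkPlan p q c β (t + 2) i j) - √(p i)) ^ 2 ≤
        ∑ i, (√(∑ j, sinkPlan p q c β (t + 2) i j) - √(p i)) ^ 2 :=
      Finset.single_le_sum (f := fun i => (√(∑ j, sinkPlan p q c β (t + 2) i j) - √(p i)) ^ 2)
        (fun i _ => sq_nonneg _) (Finset.mem_univ i)
    have h2 := Finset.sum_le_sum fun i (_ : i ∈ Finset.univ) => aux_hell (hr (t + 2) i) (hp i)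
    have h3 : ∑ i, ∑ j, sinkPlan p q c β (t + 2) i j = 1 := by
      exact aux_mass _ q (hcol (t + 1)) hq1
    rw [Finset.sum_add_distrib, Finset.sum_sub_distrib, h3, hp1] at h2
    have h4 := (hstep t).1
    have h5 := hu t
    have h6 : 0 ≤ (β (t + 2) - β (t + 1)) *
        ∑ i, ∑ j, (c i j + M) * sinkPlan p q c β (t + 2) i j :=
      mul_nonneg (sub_nonneg.2 (hβmono (by omega))) (hD _)
    simp only [hSdef] at h5
    linarith
  have hsq : Tendsto (fun t => (√(∑ j, sinkPlan p q c β (t + 2) i j) - √(p i)) ^ 2) atTop (𝓝 0) :=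
    squeeze_zero (fun t => sq_nonneg _) hbound hu0
  have habs := hsq.sqrt
  simp only [Real.sqrt_sq_eq_abs, Real.sqrt_zero] at habs
  have h7 := (tendsto_zero_iff_abs_tendsto_zero _).2 habs
  have h8 := (h7.add_const (√(p i))).pow 2
  simp only [sub_add_cancel, zero_add, Real.sq_sqrt (hp i).le, Real.sq_sqrt (hr _ i).le] at h8
  exact (tendsto_add_atTop_iff_nat 2).1 h8

lemma aux_opt {m n : ℕ} (p : Fin m → ℝ) (q : Fin n → ℝ) (c : Matrix (Fin m) (Fin n) ℝ)
    (hm : 0 < m) (hn : 0 < n) (hp : ∀ i, 0 < p i) (hq : ∀ j, 0 < q j) (hq1 : ∑ j, q j = 1)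
    (hp1 : ∑ i, p i = 1)
    (β : ℕ → ℝ) (hβpos : ∀ t, 0 < β t) (hβmono : Monotone β)
    (M : ℝ) (hM : ∀ i j, |c i j| ≤ M) :
    ∃ A : ℝ, ∀ σ : Matrix (Fin m) (Fin n) ℝ, (∀ i j, 0 ≤ σ i j) → (∀ i, ∑ j, σ i j = p i) →
      (∀ j, ∑ i, σ i j = q j) → ∀ t,
      frob c (sinkPlan p q c β (t + 1)) - frob c σ ≤ (β (t + 1))⁻¹ * (m * n) +
        (∑ i, |p i - ∑ j, sinkPlan p q c β (t + 1) i j|) * (A * (β (t + 1))⁻¹ + 2 * M) := by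
  let k : Fin m := ⟨0, hm⟩
  refine ⟨∑ i, |Real.log (p i) - Real.log (p k)|, fun σ hσ0 hσr hσc t => ?_⟩
  set A := ∑ i, |Real.log (p i) - Real.log (p k)| with hA
  have hpos : ∀ i j, 0 < sinkPlan p q c β (t + 1) i j := fun i j => by
    have h := aux_pos p q c β hm hn hp hq (t + 1)
    exact mul_pos (mul_pos (h.1 i) (aux_gibbs_pos c _ i j)) (h.2 j)
  have hcol := aux_col p q c β hm hn hp hq t
  have hM0 : 0 ≤ M := (abs_nonneg _).trans (hM k ⟨0, hn⟩)
  set P := sinkPlan p q c β (t + 1) with hP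
  set la := fun i => Real.log ((sinkAB p q c β (t + 1)).1 i) with hla
  have hL := aux_log p q c β hm hn hp hq (t + 1)
  have k1 := aux_key P c (fun i j => Real.log (P i j)) la q _ (β (t + 1)) hcol hL
  have k2 := aux_key σ c (fun i j => Real.log (P i j)) la q _ (β (t + 1)) hσc hL
  simp only [hσr] at k2
  have hle1 : ∀ i j, P i j ≤ 1 := fun i j => by
    have h1 : P i j ≤ q j := by
      rw [← hcol j]
      exact Finset.single_le_sum (f := fun i => P i j)
        (fun i _ => (hpos i j).le) (Finset.mem_univ i)
    have h2 : q j ≤ 1 := by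
      rw [← hq1]
      exact Finset.single_le_sum (fun i _ => (hq i).le) (Finset.mem_univ j)
    exact h1.trans h2
  have e1 : ∑ i, ∑ j, σ i j * Real.log (P i j) ≤ 0 :=
    Finset.sum_nonpos fun i _ => Finset.sum_nonpos fun j _ =>
      mul_nonpos_of_nonneg_of_nonpos (hσ0 i j) (Real.log_nonpos (hpos i j).le (hle1 i j))
  have e2 : -(m * n : ℝ) ≤ ∑ i, ∑ j, P i j * Real.log (P i j) := by
    have : ∑ i : Fin m, ∑ j : Fin n, (-1 : ℝ) ≤ ∑ i, ∑ j, P i j * Real.log (P i j) :=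
      Finset.sum_le_sum fun i _ => Finset.sum_le_sum fun j _ => by
        have h1 := aux_kl_term (hpos i j) one_pos
        have h2 := hpos i j
        rw [Real.log_one, sub_zero] at h1
        linarith
    simpa using this
  have hmass : ∑ i, ∑ j, P i j = 1 := by
    exact aux_mass _ q hcol hq1
  have e3 : ∑ i, (∑ j, P i j) * la i - ∑ i, p i * la i =
      ∑ i, ((∑ j, P i j) - p i) * (la i - la k) := by
    simp only [sub_mul, mul_sub, Finset.sum_sub_distrib, ← Finset.sum_mul, hmass, hp1]
    ring
  have hAi : ∀ i, |Real.log (p i) - Real.log (p k)| ≤ A := fun i =>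
    Finset.single_le_sum (f := fun i => |Real.log (p i) - Real.log (p k)|)
      (fun i _ => abs_nonneg _) (Finset.mem_univ i)
  have hosc : ∀ i, |la i - la k| ≤ A + β (t + 1) * (2 * M) := by
    intro i
    have h1 := aux_osc p q c β hm hn hp hq hβpos M hM t i k
    have h2 := aux_osc p q c β hm hn hp hq hβpos M hM t k i
    have h3 := abs_le.1 (hAi i)
    have h4 : β t * (2 * M) ≤ β (t + 1) * (2 * M) :=
      mul_le_mul_of_nonneg_right (hβmono (Nat.le_succ t)) (by linarith)
    rw [abs_le]
    simp only [hla]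
    constructor <;> linarith [h3.1, h3.2]
  have e4 : ∑ i, ((∑ j, P i j) - p i) * (la i - la k) ≤
      (∑ i, |p i - ∑ j, P i j|) * (A + β (t + 1) * (2 * M)) := by
    rw [Finset.sum_mul]
    refine Finset.sum_le_sum fun i _ => ?_
    refine (le_abs_self _).trans ?_
    rw [abs_mul, abs_sub_comm]
    exact mul_le_mul_of_nonneg_left (hosc i) (abs_nonneg _)
  have hb := hβpos (t + 1)
  have fin : β (t + 1) * (frob c P - frob c σ) ≤
      m * n + (∑ i, |p i - ∑ j, P i j|) * (A + β (t + 1) * (2 * M)) := by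
    unfold frob
    linarith
  have h6 := mul_le_mul_of_nonneg_left fin (inv_pos.2 hb).le
  rw [inv_mul_cancel_left₀ hb.ne'] at h6
  refine h6.trans (le_of_eq ?_)
  field_simp

/-- For a positive, nondecreasing, concave annealing schedule with
`β_t → +∞` and `α_t = β_t - β_{t-1} → 0`, every accumulation point of the Annealed
Sinkhorn iterates is an optimal transport plan. -/
theorem annealed_sinkhorn_solves_OT
    {m n : ℕ} (p : Fin m → ℝ) (q : Fin n → ℝ) (c : Matrix (Fin m) (Fin n) ℝ)
    (hp : p ∈ simplexPos m) (hq : q ∈ simplexPos n)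
    (β : ℕ → ℝ) (hβpos : ∀ t, 0 < β t) (hβmono : Monotone β)
    (hβconc : ∀ t, β (t + 2) - β (t + 1) ≤ β (t + 1) - β t)
    (hβtop : Tendsto β atTop atTop)
    (hα0 : Tendsto (fun t => β (t + 1) - β t) atTop (𝓝 0)) :
    ∀ πinf, MapClusterPt πinf atTop (sinkPlan p q c β) →
      πinf ∈ Gamma p q ∧ ∀ π' ∈ Gamma p q, frob c πinf ≤ frob c π' := by
  intro πinf hcl
  obtain ⟨hp0, hp1⟩ := hp
  obtain ⟨hq0, hq1⟩ := hq
  have hm : 0 < m := by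
    rcases Nat.eq_zero_or_pos m with h | h
    · subst h; simp at hp1
    · exact h
  have hn : 0 < n := by
    rcases Nat.eq_zero_or_pos n with h | h
    · subst h; simp at hq1
    · exact h
  have hM : ∀ i j, |c i j| ≤ ∑ i, ∑ j, |c i j| := fun i j =>
    (Finset.single_le_sum (f := fun j => |c i j|) (fun j _ => abs_nonneg _)
      (Finset.mem_univ j)).trans
    (Finset.single_le_sum (f := fun i => ∑ j, |c i j|)
      (fun i _ => Finset.sum_nonneg fun j _ => abs_nonneg _) (Finset.mem_univ i))
  have hrow := aux_row p q c hm hn hp0 hq0 hp1 hq1 β hβmono hβconc hα0 _ hM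
  obtain ⟨A, hA⟩ := aux_opt p q c hm hn hp0 hq0 hq1 hp1 β hβpos hβmono _ hM
  obtain ⟨U, hU, hlim⟩ := mapClusterPt_iff_ultrafilter.1 hcl
  have hent : ∀ i j, Tendsto (fun t => sinkPlan p q c β t i j) U (𝓝 (πinf i j)) := fun i j =>
    (tendsto_pi_nhds.1 (tendsto_pi_nhds.1 hlim i) j)
  have hev : ∀ᶠ t in (U : Filter ℕ), 1 ≤ t := hU (eventually_ge_atTop 1)
  have hγ : πinf ∈ Gamma p q := by
    refine ⟨fun i j => ?_, ?_, ?_⟩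
    · refine ge_of_tendsto' (hent i j) fun t => ?_
      have h := aux_pos p q c β hm hn hp0 hq0 t
      exact (mul_pos (mul_pos (h.1 i) (aux_gibbs_pos c _ i j)) (h.2 j)).le
    · funext i
      exact tendsto_nhds_unique (tendsto_finsetSum _ fun j _ => hent i j) ((hrow i).mono_left hU)
    · funext j
      refine tendsto_nhds_unique (tendsto_finsetSum _ fun i _ => hent i j) ?_
      refine Tendsto.congr' ?_ tendsto_const_nhds
      filter_upwards [hev] with t ht
      obtain ⟨s, rfl⟩ := Nat.exists_eq_add_of_le' ht
      exact (aux_col p q c β hm hn hp0 hq0 s j).symm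
  refine ⟨hγ, fun σ hσ => ?_⟩
  have hfrob : Tendsto (fun t => frob c (sinkPlan p q c β t) - frob c σ) U
      (𝓝 (frob c πinf - frob c σ)) :=
    (tendsto_finsetSum _ fun i _ => tendsto_finsetSum _ fun j _ =>
      (hent i j).const_mul (c i j)).sub_const _
  have hinv : Tendsto (fun t => (β t)⁻¹) atTop (𝓝 0) := hβtop.inv_tendsto_atTop
  have hsum : Tendsto (fun t => ∑ i, |p i - ∑ j, sinkPlan p q c β t i j|) atTop (𝓝 0) := by
    have : Tendsto (fun t => ∑ i, |p i - ∑ j, sinkPlan p q c β t i j|) atTop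
        (𝓝 (∑ i, |p i - p i|)) :=
      tendsto_finsetSum _ fun i _ => ((hrow i).const_sub (p i)).abs
    simpa using this
  have hR := (hinv.mul_const (m * n : ℝ)).add
    (hsum.mul ((hinv.const_mul A).add_const (2 * ∑ i, ∑ j, |c i j|)))
  simp only [zero_mul, add_zero] at hR
  have := le_of_tendsto_of_tendsto hfrob (hR.mono_left hU) (by
    filter_upwards [hev] with t ht
    obtain ⟨s, rfl⟩ := Nat.exists_eq_add_of_le' ht
    exact hA σ hσ.1 (fun i => congrFun hσ.2.1 i) (fun j => congrFun hσ.2.2 j) s)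
  linarith

end
end

section
/- Let p ∈ Δ*_m, q ∈ Δ*_n, c ∈ ℝ^{m×n}, and let (β_t)_{t≥0} be a positive, nondecreasing, concave annealing schedule with finite limit β_∞ = lim β_t < +∞ (so that necessarily α_t = β_t − β_{t−1} → 0). Let (π_t) be the sequence generated by Annealed Sinkhorn. Then (π_t) converges to the unique minimizer of the entropic optimal transport problem EOT_{β_∞}(p,q), i.e. the unique minimizer over Γ(p,q) of ⟨c,π⟩ + β_∞^{-1} KL(π | π^ref). -/
open Finset Filter Topology ENNReal

noncomputable section

lemma as_rec (d e : ℕ → ℝ) (w : ℝ) (hw : 0 < w) (hw1 : w < 1) (hd : ∀ t, 0 ≤ d t)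
    (h : ∀ t, d (t + 1) ≤ (1 - w) * d t + e t) (he : Tendsto e atTop (𝓝 0)) :
    Tendsto d atTop (𝓝 0) := by
  rw [Metric.tendsto_atTop]
  intro η hη
  have h1 : ∀ᶠ t in atTop, e t < w * (η / 2) := he.eventually (gt_mem_nhds (by positivity))
  obtain ⟨T, hT⟩ := eventually_atTop.1 h1
  have h2 : ∀ s, d (T + s) ≤ η / 2 + (1 - w) ^ s * d T := by
    intro s
    induction s with
    | zero => simp; linarith
    | succ s ih =>
      have a1 := h (T + s)
      have a2 := hT (T + s) (by omega)
      have a3 := mul_le_mul_of_nonneg_left ih (by linarith : (0:ℝ) ≤ 1 - w)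
      rw [← add_assoc, pow_succ]
      nlinarith
  have h3 : Tendsto (fun s => (1 - w) ^ s * d T) atTop (𝓝 0) := by
    simpa using (tendsto_pow_atTop_nhds_zero_of_lt_one (by linarith : (0:ℝ) ≤ 1 - w)
      (by linarith)).mul_const (d T)
  obtain ⟨S, hS⟩ := eventually_atTop.1 (h3.eventually (gt_mem_nhds (half_pos hη)))
  refine ⟨T + S, fun t ht => ?_⟩
  obtain ⟨k, rfl⟩ := Nat.exists_eq_add_of_le ht
  have b1 := h2 (S + k)
  have b2 := hS (S + k) (by omega)
  rw [Real.dist_eq, sub_zero, abs_of_nonneg (hd _), add_assoc]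
  linarith

lemma as_step {m n : ℕ} (p : Fin m → ℝ) (q : Fin n → ℝ) (P e : Matrix (Fin m) (Fin n) ℝ)
    (w E lo hi : ℝ) (k0 : Fin m) [NeZero n]
    (hq : ∀ j, 0 < q j) (hP : ∀ i j, 0 < P i j) (hcol : ∀ j, ∑ i, P i j = q j)
    (hw : ∀ i j, w * q j ≤ P i j) (hE : 0 < E) (he : ∀ i j, E⁻¹ ≤ e i j ∧ e i j ≤ E)
    (hlo : 0 < lo) (r : Fin m → ℝ) (hr : ∀ i, r i = p i / ∑ j, P i j)
    (hr1 : ∀ i, lo ≤ r i ∧ r i ≤ hi) (hk0 : r k0 = lo) (P' : Matrix (Fin m) (Fin n) ℝ)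
    (hP' : ∀ i j, P' i j = q j * (P i j * r i * e i j) / ∑ k, P k j * r k * e k j) (i : Fin m) :
    lo / E ^ 2 ≤ p i / ∑ j, P' i j ∧ p i / ∑ j, P' i j ≤ E ^ 2 * (hi - w * (hi - lo)) := by
  have hEi : 0 < E⁻¹ := inv_pos.2 hE
  have hrp : ∀ i, 0 < r i := fun i => lt_of_lt_of_le hlo (hr1 i).1
  have hlohi : lo ≤ hi := (hr1 k0).1.trans (hr1 k0).2
  set C := hi - w * (hi - lo) with hC
  have hX1 : ∀ j, lo * E⁻¹ * q j ≤ ∑ k, P k j * r k * e k j := by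
    intro j
    rw [← hcol j, Finset.mul_sum]
    refine Finset.sum_le_sum fun k _ => ?_
    have := mul_le_mul (hr1 k).1 (he k j).1 hEi.le (hrp k).le
    have := mul_le_mul_of_nonneg_left this (hP k j).le
    linarith
  have hX2 : ∀ j, ∑ k, P k j * r k * e k j ≤ E * C * q j := by
    intro j
    have a1 : ∑ k, P k j * r k * e k j ≤ E * ∑ k, P k j * r k := by
      rw [Finset.mul_sum]
      refine Finset.sum_le_sum fun k _ => ?_
      have := mul_le_mul_of_nonneg_left (he k j).2 (mul_pos (hP k j) (hrp k)).le
      linarith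
    have a2 : P k0 j * (hi - r k0) ≤ ∑ k, P k j * (hi - r k) :=
      Finset.single_le_sum (f := fun k => P k j * (hi - r k))
        (fun k _ => mul_nonneg (hP k j).le (sub_nonneg.2 (hr1 k).2)) (Finset.mem_univ k0)
    have a3 : ∑ k, P k j * (hi - r k) = hi * q j - ∑ k, P k j * r k := by
      rw [← hcol j, Finset.mul_sum, ← Finset.sum_sub_distrib]
      exact Finset.sum_congr rfl fun k _ => by ring
    have a4 := mul_le_mul_of_nonneg_right (hw k0 j) (sub_nonneg.2 hlohi)
    have a5 : ∑ k, P k j * r k ≤ C * q j := by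
      rw [hk0] at a2
      rw [hC]; nlinarith
    calc _ ≤ _ := a1
      _ ≤ E * (C * q j) := mul_le_mul_of_nonneg_left a5 hE.le
      _ = _ := by ring
  have hXp : ∀ j, 0 < ∑ k, P k j * r k * e k j := fun j =>
    lt_of_lt_of_le (mul_pos (mul_pos hlo hEi) (hq j)) (hX1 j)
  have hCp : 0 < C := by
    have h1 := lt_of_lt_of_le (hXp 0) (hX2 0)
    by_contra hcon
    have : E * C * q 0 ≤ 0 := by
      have := mul_nonneg (mul_nonneg hE.le (by linarith : 0 ≤ -C)) (hq 0).le
      linarith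
    linarith
  have hrow : 0 < ∑ j, P i j := Finset.sum_pos (fun j _ => hP i j) Finset.univ_nonempty
  have hpi : p i = r i * ∑ j, P i j := by rw [hr]; field_simp
  have hpp : 0 < p i := by rw [hpi]; exact mul_pos (hrp i) hrow
  have hup : ∑ j, P' i j ≤ E ^ 2 / lo * p i := by
    rw [hpi, ← mul_assoc, Finset.mul_sum]
    refine Finset.sum_le_sum fun j _ => ?_
    rw [hP', div_le_iff₀ (hXp j)]
    have h1 : r i * P i j * e i j * q j ≤ r i * P i j * E * q j := by
      have := mul_pos (hrp i) (hP i j)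
      have := hq j
      gcongr; exact (he i j).2
    have h2 : E ^ 2 / lo * r i * P i j * (lo * E⁻¹ * q j) ≤
        E ^ 2 / lo * r i * P i j * ∑ k, P k j * r k * e k j :=
      mul_le_mul_of_nonneg_left (hX1 j) (by have := hrp i; have := hP i j; positivity)
    have h3 : E ^ 2 / lo * r i * P i j * (lo * E⁻¹ * q j) = r i * P i j * E * q j := by
      field_simp
    linarith
  have hdn : p i / (E ^ 2 * C) ≤ ∑ j, P' i j := by
    rw [hpi, mul_div_right_comm, Finset.mul_sum]
    refine Finset.sum_le_sum fun j _ => ?_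
    rw [hP', le_div_iff₀ (hXp j)]
    have h1 : r i * P i j * E⁻¹ * q j ≤ r i * P i j * e i j * q j := by
      have := mul_pos (hrp i) (hP i j)
      have := hq j
      gcongr; exact (he i j).1
    have h2 : r i / (E ^ 2 * C) * P i j * (∑ k, P k j * r k * e k j) ≤
        r i / (E ^ 2 * C) * P i j * (E * C * q j) :=
      mul_le_mul_of_nonneg_left (hX2 j) (by have := hrp i; have := hP i j; positivity)
    have h3 : r i / (E ^ 2 * C) * P i j * (E * C * q j) = r i * P i j * E⁻¹ * q j := by
      field_simp
    linarith
  have hS : 0 < ∑ j, P' i j := lt_of_lt_of_le (by positivity) hdn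
  constructor
  · rw [le_div_iff₀ hS]
    calc lo / E ^ 2 * ∑ j, P' i j ≤ lo / E ^ 2 * (E ^ 2 / lo * p i) :=
          mul_le_mul_of_nonneg_left hup (by positivity)
      _ = p i := by field_simp
  · rw [div_le_iff₀ hS]
    rw [div_le_iff₀ (by positivity)] at hdn
    linarith

lemma as_kl (x y : ℝ) (hx : 0 ≤ x) (hy : 0 < y) :
    0 ≤ x * Real.log x - x * Real.log y - x + y ∧
      (x ≠ y → 0 < x * Real.log x - x * Real.log y - x + y) := by
  rcases hx.eq_or_lt with rfl | hx
  · simp [hy, hy.le]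
  · have h0 : Real.log (y / x) = Real.log y - Real.log x := Real.log_div hy.ne' hx.ne'
    have hxy : x * (y / x) = y := by field_simp
    constructor
    · have := mul_le_mul_of_nonneg_left (Real.log_le_sub_one_of_pos (div_pos hy hx)) hx.le
      rw [h0] at this; nlinarith
    · intro hne
      have := mul_lt_mul_of_pos_left (Real.log_lt_sub_one_of_pos (div_pos hy hx)
        (by rw [Ne, div_eq_one_iff_eq hx.ne']; exact hne.symm)) hx
      rw [h0] at this; nlinarith

lemma as_min {m n : ℕ} [NeZero m] [NeZero n] (p : Fin m → ℝ) (q : Fin n → ℝ)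
    (c : Matrix (Fin m) (Fin n) ℝ) (β : ℝ) (hβ : 0 < β) (P : Matrix (Fin m) (Fin n) ℝ)
    (hP : P ∈ Gamma p q) (hpos : ∀ i j, 0 < P i j)
    (hcr : ∀ i j k l, P i j * P k l * (gibbs c β i l * gibbs c β k j) =
      P i l * P k j * (gibbs c β i j * gibbs c β k l))
    (Q : Matrix (Fin m) (Fin n) ℝ) (hQ : Q ∈ Gamma p q) (hne : Q ≠ P) :
    eotObj c β P < eotObj c β Q := by
  set u : Fin m → Fin n → ℝ := fun i j => Real.log (P i j) + β * c i j with hu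
  have hu1 : ∀ i j k l, u i j + u k l = u i l + u k j := by
    intro i j k l
    have h := congrArg Real.log (hcr i j k l)
    simp only [gibbs] at h
    rw [Real.log_mul, Real.log_mul, Real.log_mul (x := Real.exp _), Real.log_mul, Real.log_mul,
      Real.log_mul (x := Real.exp _)] at h
    · simp only [Real.log_exp] at h
      simp only [hu]; linarith
    all_goals first
      | exact (Real.exp_pos _).ne'
      | exact (hpos _ _).ne'
      | exact (mul_pos (hpos _ _) (hpos _ _)).ne'
      | exact (mul_pos (Real.exp_pos _) (Real.exp_pos _)).ne'
  have hm : (0:ℝ) < m := Nat.cast_pos.2 (Nat.pos_of_ne_zero (NeZero.ne m))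
  have hn : (0:ℝ) < n := Nat.cast_pos.2 (Nat.pos_of_ne_zero (NeZero.ne n))
  -- linear functionals agree on Gamma
  have hlin : ∀ R ∈ Gamma p q, ∑ i, ∑ j, R i j * (u i j - Real.log (1 / (m * n)) - 1) =
      ∑ i, p i * (u i 0 - u 0 0 - Real.log (1 / (m * n)) - 1) + ∑ j, q j * u 0 j := by
    intro R hR
    obtain ⟨_, h1, h2⟩ := hR
    have : ∀ i j, R i j * (u i j - Real.log (1 / (m * n)) - 1) =
        R i j * (u i 0 - u 0 0 - Real.log (1 / (m * n)) - 1) + R i j * u 0 j := by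
      intro i j
      have := hu1 i j 0 0
      have h3 : u i j = u i 0 + u 0 j - u 0 0 := by linarith
      rw [h3]; ring
    simp only [this, Finset.sum_add_distrib]
    congr 1
    · refine Finset.sum_congr rfl fun i _ => ?_
      rw [← Finset.sum_mul, ← h1]; rfl
    · rw [Finset.sum_comm]
      refine Finset.sum_congr rfl fun j _ => ?_
      rw [← Finset.sum_mul, ← h2]; rfl
  have hobj : ∀ R ∈ Gamma p q, β * eotObj c β R =
      ∑ i, ∑ j, R i j * (u i j - Real.log (1 / (m * n)) - 1) +
      ∑ i, ∑ j, (R i j * Real.log (R i j) - R i j * Real.log (P i j)) +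
      ∑ i : Fin m, ∑ j : Fin n, (1 / (m * n) : ℝ) := by
    intro R hR
    rw [eotObj, mul_add, mul_inv_cancel_left₀ hβ.ne', frob, KLmat]
    simp only [Finset.mul_sum, ← Finset.sum_add_distrib]
    refine Finset.sum_congr rfl fun i _ => Finset.sum_congr rfl fun j _ => ?_
    simp only [piRef, hu]
    rcases (hR.1 i j).eq_or_lt with h | h
    · rw [← h]; simp
    · rw [Real.log_div h.ne' (by positivity)]; ring
  have hsum : ∀ R ∈ Gamma p q, ∑ i, ∑ j, R i j = ∑ i, p i := by
    intro R hR
    exact Finset.sum_congr rfl fun i _ => congrFun hR.2.1 i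
  have hkl : 0 < ∑ i, ∑ j, (Q i j * Real.log (Q i j) - Q i j * Real.log (P i j) - Q i j + P i j) := by
    obtain ⟨i0, j0, hij⟩ : ∃ i j, Q i j ≠ P i j := by
      by_contra hcon
      push Not at hcon
      exact hne (by ext i j; exact hcon i j)
    refine Finset.sum_pos' (fun i _ => Finset.sum_nonneg fun j _ => (as_kl _ _ (hQ.1 i j) (hpos i j)).1)
      ⟨i0, Finset.mem_univ _, Finset.sum_pos'
        (fun j _ => (as_kl _ _ (hQ.1 i0 j) (hpos i0 j)).1)
        ⟨j0, Finset.mem_univ _, (as_kl _ _ (hQ.1 i0 j0) (hpos i0 j0)).2 hij⟩⟩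
  simp only [Finset.sum_add_distrib, Finset.sum_sub_distrib] at hkl
  rw [hsum P hP, hsum Q hQ] at hkl
  have h1 := hobj P hP
  have h2 := hobj Q hQ
  rw [hlin P hP] at h1
  rw [hlin Q hQ] at h2
  simp only [sub_self, Finset.sum_const_zero] at h1
  simp only [Finset.sum_sub_distrib] at h1 h2
  have : β * eotObj c β P < β * eotObj c β Q := by linarith
  exact lt_of_mul_lt_mul_left this hβ.le

section
variable {m n : ℕ} [NeZero m] [NeZero n] (p : Fin m → ℝ) (q : Fin n → ℝ)
  (c : Matrix (Fin m) (Fin n) ℝ) (β : ℕ → ℝ)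

lemma as_pos (hp : ∀ i, 0 < p i) (hq : ∀ j, 0 < q j) (t : ℕ) :
    (∀ i, 0 < (sinkAB p q c β t).1 i) ∧ ∀ j, 0 < (sinkAB p q c β t).2 j := by
  induction t with
  | zero => simp [sinkAB]
  | succ t ih =>
    have ha : ∀ i, 0 < (sinkAB p q c β (t + 1)).1 i := by
      intro i
      simp only [sinkAB]
      exact div_pos (hp i) (Finset.sum_pos (fun j _ => mul_pos (Real.exp_pos _) (ih.2 j))
        Finset.univ_nonempty)
    refine ⟨ha, fun j => ?_⟩
    exact div_pos (hq j) (Finset.sum_pos (fun i _ => mul_pos (Real.exp_pos _) (ha i))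
      Finset.univ_nonempty)

lemma as_b (t : ℕ) (j : Fin n) : (sinkAB p q c β (t + 1)).2 j =
    q j / ∑ i, gibbs c (β (t + 1)) i j * (sinkAB p q c β (t + 1)).1 i := rfl

lemma as_a (t : ℕ) (i : Fin m) : (sinkAB p q c β (t + 1)).1 i =
    p i / ∑ j, gibbs c (β t) i j * (sinkAB p q c β t).2 j := rfl

lemma as_planpos (hp : ∀ i, 0 < p i) (hq : ∀ j, 0 < q j) (t : ℕ) (i : Fin m) (j : Fin n) :
    0 < sinkPlan p q c β t i j :=
  mul_pos (mul_pos ((as_pos p q c β hp hq t).1 i) (Real.exp_pos _)) ((as_pos p q c β hp hq t).2 j)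

lemma as_col (hp : ∀ i, 0 < p i) (hq : ∀ j, 0 < q j) (t : ℕ) (j : Fin n) :
    ∑ i, sinkPlan p q c β (t + 1) i j = q j := by
  simp only [sinkPlan]
  rw [← Finset.sum_mul, as_b]
  have : ∑ i, (sinkAB p q c β (t + 1)).1 i * gibbs c (β (t + 1)) i j =
      ∑ i, gibbs c (β (t + 1)) i j * (sinkAB p q c β (t + 1)).1 i :=
    Finset.sum_congr rfl fun i _ => mul_comm _ _
  rw [this]
  have h : 0 < ∑ i, gibbs c (β (t + 1)) i j * (sinkAB p q c β (t + 1)).1 i :=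
    Finset.sum_pos (fun i _ => mul_pos (Real.exp_pos _) ((as_pos p q c β hp hq _).1 i))
      Finset.univ_nonempty
  field_simp

lemma as_upd (hp : ∀ i, 0 < p i) (hq : ∀ j, 0 < q j) (t : ℕ) (i : Fin m) (j : Fin n) :
    sinkPlan p q c β (t + 1) i j =
      q j * (sinkPlan p q c β t i j * (p i / ∑ l, sinkPlan p q c β t i l) *
        gibbs c (β (t + 1) - β t) i j) /
      ∑ k, sinkPlan p q c β t k j * (p k / ∑ l, sinkPlan p q c β t k l) *
        gibbs c (β (t + 1) - β t) k j := by
  have hb := (as_pos p q c β hp hq t).2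
  have key : ∀ k, sinkPlan p q c β t k j * (p k / ∑ l, sinkPlan p q c β t k l) *
        gibbs c (β (t + 1) - β t) k j =
      (gibbs c (β (t + 1)) k j * (sinkAB p q c β (t + 1)).1 k) * (sinkAB p q c β t).2 j := by
    intro k
    rw [as_a]
    have h1 : ∑ l, sinkPlan p q c β t k l = (sinkAB p q c β t).1 k *
        ∑ l, gibbs c (β t) k l * (sinkAB p q c β t).2 l := by
      rw [Finset.mul_sum]
      exact Finset.sum_congr rfl fun l _ => by simp only [sinkPlan]; ring
    have h2 : gibbs c (β (t + 1)) k j = gibbs c (β t) k j * gibbs c (β (t + 1) - β t) k j := by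
      simp only [gibbs]
      rw [← Real.exp_add]; congr 1; ring
    have h3 : 0 < ∑ l, gibbs c (β t) k l * (sinkAB p q c β t).2 l :=
      Finset.sum_pos (fun l _ => mul_pos (Real.exp_pos _) (hb l)) Finset.univ_nonempty
    have h4 := (as_pos p q c β hp hq t).1 k
    rw [h1, h2]
    simp only [sinkPlan]
    field_simp
  simp only [key]
  rw [← Finset.sum_mul]
  have h : 0 < ∑ i, gibbs c (β (t + 1)) i j * (sinkAB p q c β (t + 1)).1 i :=
    Finset.sum_pos (fun i _ => mul_pos (Real.exp_pos _) ((as_pos p q c β hp hq _).1 i))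
      Finset.univ_nonempty
  have := hb j
  rw [sinkPlan, as_b]
  field_simp

lemma as_lower (hp : ∀ i, 0 < p i) (hp1 : ∑ i, p i = 1) (hq : ∀ j, 0 < q j) (L : ℝ) (hL : 0 < L)
    (hK : ∀ t i j, L⁻¹ ≤ gibbs c (β t) i j ∧ gibbs c (β t) i j ≤ L) (t : ℕ) (i : Fin m)
    (j : Fin n) : p i * q j / L ^ 4 ≤ sinkPlan p q c β (t + 1) i j := by
  have hb := (as_pos p q c β hp hq t).2
  set s := ∑ j, (sinkAB p q c β t).2 j with hs
  have hsp : 0 < s := Finset.sum_pos (fun j _ => hb j) Finset.univ_nonempty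
  have h1 : ∀ k, L⁻¹ * s ≤ ∑ j, gibbs c (β t) k j * (sinkAB p q c β t).2 j := fun k => by
    rw [hs, Finset.mul_sum]
    exact Finset.sum_le_sum fun j _ => mul_le_mul_of_nonneg_right (hK t k j).1 (hb j).le
  have h2 : ∀ k, ∑ j, gibbs c (β t) k j * (sinkAB p q c β t).2 j ≤ L * s := fun k => by
    rw [hs, Finset.mul_sum]
    exact Finset.sum_le_sum fun j _ => mul_le_mul_of_nonneg_right (hK t k j).2 (hb j).le
  have h0 : ∀ k, 0 < ∑ j, gibbs c (β t) k j * (sinkAB p q c β t).2 j := fun k =>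
    lt_of_lt_of_le (by positivity) (h1 k)
  have a1 : p i / (L * s) ≤ (sinkAB p q c β (t + 1)).1 i := by
    rw [as_a]; exact div_le_div_of_nonneg_left (hp i).le (h0 i) (h2 i)
  have a2 : ∀ k, (sinkAB p q c β (t + 1)).1 k ≤ p k * (L / s) := by
    intro k
    rw [as_a]
    refine (div_le_div_of_nonneg_left (hp k).le (by positivity) (h1 k)).trans (le_of_eq ?_)
    field_simp
  have ha := (as_pos p q c β hp hq (t + 1)).1
  have a3 : ∑ k, gibbs c (β (t + 1)) k j * (sinkAB p q c β (t + 1)).1 k ≤ L * (L / s) := by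
    calc _ ≤ ∑ k, L * (p k * (L / s)) := Finset.sum_le_sum fun k _ =>
          mul_le_mul (hK _ k j).2 (a2 k) (ha k).le hL.le
      _ = _ := by rw [← Finset.mul_sum, ← Finset.sum_mul, hp1, one_mul]
  have h : 0 < ∑ i, gibbs c (β (t + 1)) i j * (sinkAB p q c β (t + 1)).1 i :=
    Finset.sum_pos (fun i _ => mul_pos (Real.exp_pos _) (ha i)) Finset.univ_nonempty
  have a4 : q j / (L * (L / s)) ≤ (sinkAB p q c β (t + 1)).2 j := by
    rw [as_b]; exact div_le_div_of_nonneg_left (hq j).le h a3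
  have hpi := hp i
  have hqj := hq j
  calc p i * q j / L ^ 4 = p i / (L * s) * L⁻¹ * (q j / (L * (L / s))) := by field_simp
    _ ≤ _ := by
      refine mul_le_mul (mul_le_mul a1 (hK _ i j).1 (by positivity) (ha i).le) a4 (by positivity) ?_
      exact (mul_pos (ha i) (Real.exp_pos _)).le

lemma as_row (hp : ∀ i, 0 < p i) (hp1 : ∑ i, p i = 1) (hq : ∀ j, 0 < q j) (hq1 : ∑ j, q j = 1)
    (L : ℝ) (hL : 1 ≤ L)
    (hK : ∀ t i j, L⁻¹ ≤ gibbs c (β t) i j ∧ gibbs c (β t) i j ≤ L)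
    (E : ℕ → ℝ) (hE1 : ∀ t, 1 ≤ E t) (hE : Tendsto E atTop (𝓝 1))
    (hKE : ∀ t i j, (E t)⁻¹ ≤ gibbs c (β (t + 1) - β t) i j ∧
      gibbs c (β (t + 1) - β t) i j ≤ E t) (i : Fin m) :
    Tendsto (fun t => ∑ j, sinkPlan p q c β (t + 1) i j) atTop (𝓝 (p i)) := by
  have hL0 : 0 < L := by linarith
  have hlow := as_lower p q c β hp hp1 hq L hL0 hK
  set P : ℕ → Matrix (Fin m) (Fin n) ℝ := fun t => sinkPlan p q c β (t + 1) with hPdef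
  have hPp : ∀ t i j, 0 < P t i j := fun t => as_planpos p q c β hp hq (t + 1)
  have hrowp : ∀ t i, 0 < ∑ j, P t i j := fun t i =>
    Finset.sum_pos (fun j _ => hPp t i j) Finset.univ_nonempty
  set r : ℕ → Fin m → ℝ := fun t i => p i / ∑ j, P t i j with hr
  have hrp : ∀ t i, 0 < r t i := fun t i => div_pos (hp i) (hrowp t i)
  have hrH : ∀ t i, r t i ≤ L ^ 4 := by
    intro t i
    rw [hr]; simp only
    rw [div_le_iff₀ (hrowp t i)]
    have : p i / L ^ 4 ≤ ∑ j, P t i j := by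
      calc p i / L ^ 4 = ∑ j, p i * q j / L ^ 4 := by
            rw [← Finset.sum_div, ← Finset.mul_sum, hq1, mul_one]
        _ ≤ _ := Finset.sum_le_sum fun j _ => hlow t i j
    rw [div_le_iff₀ (by positivity)] at this
    linarith
  obtain ⟨kp, -, hkp⟩ := Finset.exists_min_image Finset.univ p Finset.univ_nonempty
  set w := min (1 / 2) (p kp / L ^ 4) with hw
  have hwp : 0 < w := lt_min (by norm_num) (div_pos (hp kp) (by positivity))
  have hw1 : w < 1 := lt_of_le_of_lt (min_le_left _ _) (by norm_num)
  have hwP : ∀ t i j, w * q j ≤ P t i j := by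
    intro t i j
    refine le_trans ?_ (hlow t i j)
    rw [mul_div_right_comm]
    refine mul_le_mul_of_nonneg_right ((min_le_right _ _).trans ?_) (hq j).le
    exact div_le_div_of_nonneg_right (hkp i (Finset.mem_univ _)) (by positivity)
  have hmaxex : ∀ t, ∃ k, ∀ k', r t k' ≤ r t k := fun t => by
    obtain ⟨k, -, hk⟩ := Finset.exists_max_image Finset.univ (r t) Finset.univ_nonempty
    exact ⟨k, fun k' => hk k' (Finset.mem_univ _)⟩
  have hminex : ∀ t, ∃ k, ∀ k', r t k ≤ r t k' := fun t => by
    obtain ⟨k, -, hk⟩ := Finset.exists_min_image Finset.univ (r t) Finset.univ_nonempty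
    exact ⟨k, fun k' => hk k' (Finset.mem_univ _)⟩
  choose kM hM using hmaxex
  choose km hm using hminex
  set d : ℕ → ℝ := fun t => r t (kM t) - r t (km t) with hd
  have hd0 : Tendsto d atTop (𝓝 0) := by
    refine as_rec d (fun t => 2 * ((E (t + 1)) ^ 2 - 1) * L ^ 4) w hwp hw1
      (fun t => sub_nonneg.2 (hM t _)) ?_ ?_
    · intro t
      have hstep := as_step p q (P t) (gibbs c (β (t + 1 + 1) - β (t + 1))) w (E (t + 1))
        (r t (km t)) (r t (kM t)) (km t) hq (hPp t) (as_col p q c β hp hq t) (hwP t)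
        (by linarith [hE1 (t + 1)]) (hKE (t + 1)) (hrp t _) (r t) (fun i => rfl)
        (fun i => ⟨hm t i, hM t i⟩) rfl (P (t + 1)) (as_upd p q c β hp hq (t + 1))
      have s1 : r (t + 1) (kM (t + 1)) ≤ _ := (hstep (kM (t + 1))).2
      have s2 : _ ≤ r (t + 1) (km (t + 1)) := (hstep (km (t + 1))).1
      have hE2 : 1 ≤ E (t + 1) ^ 2 := one_le_pow₀ (hE1 _)
      simp only [hd]
      set F := E (t + 1) ^ 2
      set lo := r t (km t)
      set hi := r t (kM t)
      have hlohi : lo ≤ hi := hM t _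
      have hlo : 0 < lo := hrp t _
      have hhi : hi ≤ L ^ 4 := hrH t _
      have e1 : F * (hi - w * (hi - lo)) ≤ (hi - w * (hi - lo)) + (F - 1) * L ^ 4 := by
        have : hi - w * (hi - lo) ≤ L ^ 4 := by nlinarith
        nlinarith
      have e2 : lo - (F - 1) * L ^ 4 ≤ lo / F := by
        rw [le_div_iff₀ (by linarith)]
        have : lo ≤ L ^ 4 := by linarith
        have h3 : (F - 1) * lo ≤ (F - 1) * L ^ 4 := mul_le_mul_of_nonneg_left this (by linarith)
        have h4 : (F - 1) * L ^ 4 ≤ (F - 1) * L ^ 4 * F := by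
          refine le_mul_of_one_le_right (mul_nonneg (by linarith) (by positivity)) hE2
        nlinarith
      linarith
    · have h1 : Tendsto (fun t => E (t + 1)) atTop (𝓝 1) := hE.comp (tendsto_add_atTop_nat 1)
      have := (((h1.pow 2).sub_const 1).const_mul 2).mul_const (L ^ 4)
      simpa using this
  have htot : ∀ t, ∑ i, ∑ j, P t i j = 1 := by
    intro t
    refine Finset.sum_comm.trans (Eq.trans ?_ hq1)
    exact Finset.sum_congr rfl fun j _ => as_col p q c β hp hq t j
  have hpr : ∀ t i, r t i * ∑ j, P t i j = p i := by
    intro t i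
    have := hrowp t i
    simp only [hr]; field_simp
  have hle : ∀ t, r t (km t) ≤ 1 := by
    intro t
    have : ∑ i, r t (km t) * ∑ j, P t i j ≤ ∑ i, p i := Finset.sum_le_sum fun i _ => by
      rw [← hpr t i]; exact mul_le_mul_of_nonneg_right (hm t i) (hrowp t i).le
    rwa [← Finset.mul_sum, htot, hp1, mul_one] at this
  have hge : ∀ t, 1 ≤ r t (kM t) := by
    intro t
    have : ∑ i, p i ≤ ∑ i, r t (kM t) * ∑ j, P t i j := Finset.sum_le_sum fun i _ => by
      rw [← hpr t i]; exact mul_le_mul_of_nonneg_right (hM t i) (hrowp t i).le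
    rwa [← Finset.mul_sum, htot, hp1, mul_one] at this
  have hri : Tendsto (fun t => r t i) atTop (𝓝 1) := by
    have l1 : Tendsto (fun t => 1 - d t) atTop (𝓝 1) := by simpa using hd0.const_sub 1
    have l2 : Tendsto (fun t => 1 + d t) atTop (𝓝 1) := by simpa using hd0.const_add 1
    refine tendsto_of_tendsto_of_tendsto_of_le_of_le l1 l2 (fun t => ?_) (fun t => ?_)
    · have := hm t i; have := hge t; simp only [hd]; linarith
    · have := hM t i; have := hle t; simp only [hd]; linarith
  have := (hri.inv₀ one_ne_zero).const_mul (p i)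
  simp only [inv_one, mul_one] at this
  refine this.congr fun t => ?_
  have h1 := hpr t i
  have h2 := hrp t i
  show p i * (r t i)⁻¹ = ∑ j, P t i j
  rw [← h1]; field_simp

end

/-- For a positive, nondecreasing, concave annealing schedule with finite
limit `β_∞`, the Annealed Sinkhorn iterates converge to the unique minimizer of
`EOT_{β_∞}(p,q)`. -/
theorem annealed_sinkhorn_finite_limit
    {m n : ℕ} (p : Fin m → ℝ) (q : Fin n → ℝ) (c : Matrix (Fin m) (Fin n) ℝ)
    (hp : p ∈ simplexPos m) (hq : q ∈ simplexPos n)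
    (β : ℕ → ℝ) (hβpos : ∀ t, 0 < β t) (hβmono : Monotone β)
    (hβconc : ∀ t, β (t + 2) - β (t + 1) ≤ β (t + 1) - β t)
    (βinf : ℝ) (hβinf : Tendsto β atTop (𝓝 βinf)) :
    ∃ πinf ∈ Gamma p q,
      (∀ π' ∈ Gamma p q, π' ≠ πinf → eotObj c βinf πinf < eotObj c βinf π') ∧
        Tendsto (sinkPlan p q c β) atTop (𝓝 πinf) := by
  have hm0 : m ≠ 0 := by
    rintro rfl
    have := hp.2
    simp at this
  have hn0 : n ≠ 0 := by
    rintro rfl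
    have := hq.2
    simp at this
  have : NeZero m := ⟨hm0⟩
  have : NeZero n := ⟨hn0⟩
  obtain ⟨hp0, hp1⟩ := hp
  obtain ⟨hq0, hq1⟩ := hq
  have hβle : ∀ t, β t ≤ βinf := fun t => hβmono.ge_of_tendsto hβinf t
  have hβi : 0 < βinf := lt_of_lt_of_le (hβpos 0) (hβle 0)
  set M := ∑ i, ∑ j, |c i j| with hM
  have hcM : ∀ i j, |c i j| ≤ M := by
    intro i j
    have h1 : |c i j| ≤ ∑ j, |c i j| :=
      Finset.single_le_sum (f := fun j => |c i j|) (fun j _ => abs_nonneg _) (Finset.mem_univ j)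
    have h2 : ∑ j, |c i j| ≤ M :=
      Finset.single_le_sum (f := fun i => ∑ j, |c i j|)
        (fun i _ => Finset.sum_nonneg fun j _ => abs_nonneg _) (Finset.mem_univ i)
    exact h1.trans h2
  have hM0 : 0 ≤ M := Finset.sum_nonneg fun i _ => Finset.sum_nonneg fun j _ => abs_nonneg _
  have hG : ∀ b b' : ℝ, 0 ≤ b → b ≤ b' → ∀ i j, (Real.exp (b' * M))⁻¹ ≤ gibbs c b i j ∧
      gibbs c b i j ≤ Real.exp (b' * M) := by
    intro b b' hb hbb i j
    have h1 : |b * c i j| ≤ b' * M := by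
      rw [abs_mul, abs_of_nonneg hb]
      exact mul_le_mul hbb (hcM i j) (abs_nonneg _) (hb.trans hbb)
    obtain ⟨h2, h3⟩ := abs_le.1 h1
    rw [← Real.exp_neg]
    exact ⟨Real.exp_le_exp.2 (by linarith), Real.exp_le_exp.2 (by linarith)⟩
  set L := Real.exp (βinf * M) with hLdef
  have hL : 1 ≤ L := Real.one_le_exp (by positivity)
  have hL0 : 0 < L := by linarith
  have hK : ∀ t i j, L⁻¹ ≤ gibbs c (β t) i j ∧ gibbs c (β t) i j ≤ L := fun t =>
    hG (β t) βinf (hβpos t).le (hβle t)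
  have hα : ∀ t, 0 ≤ β (t + 1) - β t := fun t => sub_nonneg.2 (hβmono (Nat.le_succ t))
  have hE : Tendsto (fun t => Real.exp ((β (t + 1) - β t) * M)) atTop (𝓝 1) := by
    have h1 : Tendsto (fun t => (β (t + 1) - β t) * M) atTop (𝓝 0) := by
      have := ((hβinf.comp (tendsto_add_atTop_nat 1)).sub hβinf).mul_const M
      simpa using this
    simpa [Function.comp_def] using (Real.continuous_exp.tendsto 0).comp h1
  have hrow := as_row p q c β hp0 hp1 hq0 hq1 L hL hK _
    (fun t => Real.one_le_exp (mul_nonneg (hα t) hM0)) hE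
    (fun t => hG _ _ (hα t) le_rfl)
  have hlow := as_lower p q c β hp0 hp1 hq0 L hL0 hK
  have hcol := as_col p q c β hp0 hq0
  have hpp := as_planpos p q c β hp0 hq0
  set P : ℕ → Matrix (Fin m) (Fin n) ℝ := fun t => sinkPlan p q c β (t + 1) with hPdef
  let S : Set (Fin m → Fin n → ℝ) := Set.pi Set.univ fun i => Set.pi Set.univ fun j => Set.Icc 0 1
  have hS : IsCompact S := isCompact_univ_pi fun i => isCompact_univ_pi fun j => isCompact_Icc
  have hPS : ∀ t, P t ∈ S := by
    intro t i _ j _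
    refine ⟨(hpp (t + 1) i j).le, ?_⟩
    have h1 : P t i j ≤ ∑ i, P t i j :=
      Finset.single_le_sum (f := fun i => P t i j) (fun i _ => (hpp (t + 1) i j).le)
        (Finset.mem_univ i)
    have h2 : q j ≤ ∑ j, q j :=
      Finset.single_le_sum (fun j _ => (hq0 j).le) (Finset.mem_univ j)
    have h3 : ∑ i, P t i j = q j := hcol t j
    linarith
  have hclus : ∀ (φ : ℕ → ℕ) (R : Matrix (Fin m) (Fin n) ℝ), Tendsto φ atTop atTop →
      Tendsto (fun s => P (φ s)) atTop (𝓝 R) → R ∈ Gamma p q ∧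
      ∀ π' ∈ Gamma p q, π' ≠ R → eotObj c βinf R < eotObj c βinf π' := by
    intro φ R hφ hR
    have hR' : ∀ i j, Tendsto (fun s => P (φ s) i j) atTop (𝓝 (R i j)) := fun i j =>
      (tendsto_pi_nhds.1 ((tendsto_pi_nhds.1 hR) i)) j
    have hRp : ∀ i j, 0 < R i j := by
      intro i j
      have : p i * q j / L ^ 4 ≤ R i j :=
        ge_of_tendsto' (hR' i j) fun s => hlow (φ s) i j
      have h1 := hp0 i
      have h2 := hq0 j
      exact lt_of_lt_of_le (by positivity) this
    have hRG : R ∈ Gamma p q := by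
      refine ⟨fun i j => (hRp i j).le, funext fun i => ?_, funext fun j => ?_⟩
      · have h1 : Tendsto (fun s => ∑ j, P (φ s) i j) atTop (𝓝 (∑ j, R i j)) :=
          tendsto_finsetSum _ fun j _ => hR' i j
        exact tendsto_nhds_unique h1 ((hrow i).comp hφ)
      · have h1 : Tendsto (fun s => ∑ i, P (φ s) i j) atTop (𝓝 (∑ i, R i j)) :=
          tendsto_finsetSum _ fun i _ => hR' i j
        refine tendsto_nhds_unique h1 (tendsto_const_nhds.congr fun s => (hcol (φ s) j).symm)
    refine ⟨hRG, fun Q hQ hne => as_min p q c βinf hβi R hRG hRp ?_ Q hQ hne⟩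
    intro i j k l
    have hg : ∀ i j, Tendsto (fun s => gibbs c (β (φ s + 1)) i j) atTop (𝓝 (gibbs c βinf i j)) := by
      intro i j
      have h1 : Tendsto (fun s => β (φ s + 1)) atTop (𝓝 βinf) :=
        (hβinf.comp (tendsto_add_atTop_nat 1)).comp hφ
      exact (Real.continuous_exp.tendsto _).comp ((h1.mul_const (c i j)).neg)
    have t1 := ((hR' i j).mul (hR' k l)).mul ((hg i l).mul (hg k j))
    have t2 := ((hR' i l).mul (hR' k j)).mul ((hg i j).mul (hg k l))
    refine tendsto_nhds_unique t1 (t2.congr fun s => ?_)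
    simp only [hPdef, sinkPlan]; ring
  obtain ⟨R, -, φ, hφ, hR⟩ := hS.tendsto_subseq hPS
  obtain ⟨hRG, hRm⟩ := hclus φ R hφ.tendsto_atTop hR
  refine ⟨R, hRG, hRm, ?_⟩
  refine (tendsto_add_atTop_iff_nat 1).1 ?_
  refine tendsto_of_subseq_tendsto fun ns hns => ?_
  obtain ⟨R', -, ψ, hψ, hR'⟩ := hS.tendsto_subseq (fun s => hPS (ns s))
  refine ⟨ψ, ?_⟩
  obtain ⟨hG', hm'⟩ := hclus (fun s => ns (ψ s)) R' (hns.comp hψ.tendsto_atTop) hR'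
  have : R' = R := by
    by_contra hne
    exact lt_asymm (hRm R' hG' hne) (hm' R hRG (Ne.symm hne))
  rw [← this]
  exact hR'

end
end

section
/- Let p ∈ Δ*_m, q ∈ Δ*_n, let c ∈ ℝ^{m×n} with c ≥ 0 entrywise, and let (β_t)_{t≥0} be a positive annealing schedule whose difference sequence α_t = β_t − β_{t−1} is nonnegative and nonincreasing. Let (π_t) be generated by Annealed Sinkhorn. Then for every t ≥ 1 and every π ∈ Γ(*,q): α_t ⟨c, π_t⟩ + KL(π_t𝟙 | p) ≤ KL(π𝟙 | p) + ((β_t − β_0)/t) ⟨c, π⟩ + KL(π | π_0)/t. -/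
open Finset Filter Topology ENNReal

noncomputable section

lemma kl_term_nonneg {a b : ℝ} (ha : 0 ≤ a) (hb : 0 < b) :
    0 ≤ a * Real.log (a / b) - a + b := by
  rcases ha.eq_or_lt with h | h
  · subst h; simpa using hb.le
  · have h1 := Real.one_sub_inv_le_log_of_pos (div_pos h hb)
    have h2 := mul_le_mul_of_nonneg_left h1 h.le
    have h3 : a * (1 - (a / b)⁻¹) = a - b := by field_simp
    linarith

lemma KLvec_nonneg' {k : ℕ} {a b : Fin k → ℝ} (ha : ∀ i, 0 ≤ a i) (hb : ∀ i, 0 < b i) :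
    0 ≤ KLvec a b :=
  Finset.sum_nonneg fun i _ => kl_term_nonneg (ha i) (hb i)

lemma KLmat_nonneg' {m n : ℕ} {a b : Matrix (Fin m) (Fin n) ℝ} (ha : ∀ i j, 0 ≤ a i j)
    (hb : ∀ i j, 0 < b i j) : 0 ≤ KLmat a b :=
  Finset.sum_nonneg fun i _ => Finset.sum_nonneg fun j _ => kl_term_nonneg (ha i j) (hb i j)

lemma log_sum_ineq {m n : ℕ} {Q P : Matrix (Fin m) (Fin n) ℝ} (hQ : ∀ i j, 0 < Q i j)
    (hP : ∀ i j, 0 < P i j) (hn : 0 < n) :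
    KLvec (rowSum Q) (rowSum P) ≤ KLmat Q P := by
  haveI : Nonempty (Fin n) := ⟨⟨0, hn⟩⟩
  unfold KLvec KLmat
  refine Finset.sum_le_sum fun i _ => ?_
  have hs : 0 < rowSum Q i := Finset.sum_pos (fun j _ => hQ i j) Finset.univ_nonempty
  have hR : 0 < rowSum P i := Finset.sum_pos (fun j _ => hP i j) Finset.univ_nonempty
  have key : ∀ j ∈ (Finset.univ : Finset (Fin n)),
      Q i j * Real.log (rowSum Q i / rowSum P i) - P i j * (rowSum Q i / rowSum P i) + P i j ≤
      Q i j * Real.log (Q i j / P i j) - Q i j + P i j := by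
    intro j _
    have h := kl_term_nonneg (hQ i j).le (mul_pos (hP i j) (div_pos hs hR))
    have e : Real.log (Q i j / (P i j * (rowSum Q i / rowSum P i))) =
        Real.log (Q i j / P i j) - Real.log (rowSum Q i / rowSum P i) := by
      rw [← div_div, Real.log_div (div_pos (hQ i j) (hP i j)).ne' (div_pos hs hR).ne']
    rw [e] at h
    linarith
  refine le_trans (le_of_eq ?_) (Finset.sum_le_sum key)
  rw [Finset.sum_add_distrib, Finset.sum_sub_distrib, ← Finset.sum_mul, ← Finset.sum_mul]
  change _ = rowSum Q i * _ - rowSum P i * _ + rowSum P i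
  rw [mul_div_cancel₀ _ hR.ne']

lemma one_step {m n : ℕ} (hn : 0 < n) {Q P π : Matrix (Fin m) (Fin n) ℝ} {p : Fin m → ℝ}
    {d : Fin n → ℝ} {c : Matrix (Fin m) (Fin n) ℝ} {α : ℝ}
    (hQ : ∀ i j, 0 < Q i j) (hP : ∀ i j, 0 < P i j) (hπ : ∀ i j, 0 ≤ π i j)
    (hp : ∀ i, 0 < p i) (hd : ∀ j, 0 < d j)
    (hcol : colSum π = colSum Q)
    (hrec : ∀ i j, Q i j = P i j * (p i / rowSum P i) * Real.exp (-(α * c i j)) * d j) :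
    α * frob c Q + KLvec (rowSum Q) p + KLmat π Q ≤
      α * frob c π + KLvec (rowSum π) p + KLmat π P := by
  haveI : Nonempty (Fin n) := ⟨⟨0, hn⟩⟩
  have hR : ∀ i, 0 < rowSum P i := fun i =>
    Finset.sum_pos (fun j _ => hP i j) Finset.univ_nonempty
  have hs : ∀ i, 0 < rowSum Q i := fun i =>
    Finset.sum_pos (fun j _ => hQ i j) Finset.univ_nonempty
  have hr : ∀ i, 0 ≤ rowSum π i := fun i => Finset.sum_nonneg (fun j _ => hπ i j)
  have hL : ∀ i j, Real.log (Q i j) = Real.log (P i j) + Real.log (p i / rowSum P i)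
      - α * c i j + Real.log (d j) := by
    intro i j
    have h1 := (div_pos (hp i) (hR i)).ne'
    rw [hrec, Real.log_mul (mul_ne_zero (mul_ne_zero (hP i j).ne' h1) (Real.exp_ne_zero _))
      (hd j).ne', Real.log_mul (mul_ne_zero (hP i j).ne' h1) (Real.exp_ne_zero _),
      Real.log_mul (hP i j).ne' h1, Real.log_exp]
    ring
  have hmul : ∀ {a b : ℝ}, 0 < b → a * Real.log (a / b) = a * Real.log a - a * Real.log b := by
    intro a b hb
    rcases eq_or_ne a 0 with h | h
    · simp [h]
    · rw [Real.log_div h hb.ne']; ring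
  have A : KLmat π P - KLmat π Q - KLmat Q P =
      ∑ i, ∑ j, ((π i j - Q i j) * Real.log (p i / rowSum P i)
        - α * (c i j * π i j - c i j * Q i j) + (π i j - Q i j) * Real.log (d j)) := by
    unfold KLmat
    simp only [← Finset.sum_sub_distrib]
    refine Finset.sum_congr rfl fun i _ => Finset.sum_congr rfl fun j _ => ?_
    rw [hmul (hP i j), hmul (hQ i j), hmul (hP i j), hL]
    ring
  have B : ∑ i, ∑ j, ((π i j - Q i j) * Real.log (p i / rowSum P i)
        - α * (c i j * π i j - c i j * Q i j) + (π i j - Q i j) * Real.log (d j)) =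
      ∑ i, (rowSum π i - rowSum Q i) * Real.log (p i / rowSum P i)
        - α * (frob c π - frob c Q) := by
    have hz : ∑ i, ∑ j, (π i j - Q i j) * Real.log (d j) = 0 := by
      rw [Finset.sum_comm]
      refine Finset.sum_eq_zero fun j _ => ?_
      rw [← Finset.sum_mul, Finset.sum_sub_distrib]
      have : ∑ i, π i j = ∑ i, Q i j := congrFun hcol j
      rw [this]; ring
    simp only [Finset.sum_add_distrib, hz, add_zero, Finset.sum_sub_distrib (f := fun i => _),
      ← Finset.sum_mul, ← Finset.mul_sum, frob, rowSum, Finset.sum_sub_distrib]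
  have C : KLvec (rowSum π) p - KLvec (rowSum Q) p
      + ∑ i, (rowSum π i - rowSum Q i) * Real.log (p i / rowSum P i) =
      KLvec (rowSum π) (rowSum P) - KLvec (rowSum Q) (rowSum P) := by
    unfold KLvec
    simp only [← Finset.sum_sub_distrib, ← Finset.sum_add_distrib]
    refine Finset.sum_congr rfl fun i _ => ?_
    rw [hmul (hp i), hmul (hp i), hmul (hR i), hmul (hR i),
      Real.log_div (hp i).ne' (hR i).ne']
    ring
  have D := log_sum_ineq hQ hP hn
  have E := KLvec_nonneg' hr hR
  rw [B] at A
  linarith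

section sink
variable {m n : ℕ} {p : Fin m → ℝ} {q : Fin n → ℝ} (c : Matrix (Fin m) (Fin n) ℝ) (β : ℕ → ℝ)

lemma sinkAB_pos (hm : 0 < m) (hn : 0 < n) (hp : ∀ i, 0 < p i) (hq : ∀ j, 0 < q j) (t : ℕ) :
    (∀ i, 0 < (sinkAB p q c β t).1 i) ∧ (∀ j, 0 < (sinkAB p q c β t).2 j) := by
  haveI : Nonempty (Fin n) := ⟨⟨0, hn⟩⟩
  haveI : Nonempty (Fin m) := ⟨⟨0, hm⟩⟩
  induction t with
  | zero => simp [sinkAB]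
  | succ t ih =>
    have h1 : ∀ i, 0 < (sinkAB p q c β (t + 1)).1 i := fun i =>
      div_pos (hp i) (Finset.sum_pos (fun j _ => mul_pos (Real.exp_pos _) (ih.2 j))
        Finset.univ_nonempty)
    exact ⟨h1, fun j => div_pos (hq j) (Finset.sum_pos (fun i _ => mul_pos (Real.exp_pos _)
      (h1 i)) Finset.univ_nonempty)⟩

lemma sinkPlan_pos (hm : 0 < m) (hn : 0 < n) (hp : ∀ i, 0 < p i) (hq : ∀ j, 0 < q j) (t : ℕ)
    (i : Fin m) (j : Fin n) : 0 < sinkPlan p q c β t i j :=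
  mul_pos (mul_pos ((sinkAB_pos c β hm hn hp hq t).1 i) (Real.exp_pos _))
    ((sinkAB_pos c β hm hn hp hq t).2 j)

lemma sinkPlan_col (hm : 0 < m) (hn : 0 < n) (hp : ∀ i, 0 < p i) (hq : ∀ j, 0 < q j) (t : ℕ) :
    colSum (sinkPlan p q c β (t + 1)) = q := by
  haveI : Nonempty (Fin m) := ⟨⟨0, hm⟩⟩
  funext j
  have hpos : 0 < ∑ i, gibbs c (β (t + 1)) i j * (sinkAB p q c β (t + 1)).1 i :=
    Finset.sum_pos (fun i _ => mul_pos (Real.exp_pos _)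
      ((sinkAB_pos c β hm hn hp hq (t + 1)).1 i)) Finset.univ_nonempty
  have hb : (sinkAB p q c β (t + 1)).2 j =
    q j / ∑ i, gibbs c (β (t + 1)) i j * (sinkAB p q c β (t + 1)).1 i := rfl
  unfold colSum sinkPlan
  rw [← Finset.sum_mul, hb]
  simp only [mul_comm ((sinkAB p q c β (t + 1)).1 _)]
  rw [mul_div_cancel₀ _ hpos.ne']

lemma sink_step (hm : 0 < m) (hn : 0 < n) (hp : ∀ i, 0 < p i) (hq : ∀ j, 0 < q j) (t : ℕ)
    {π : Matrix (Fin m) (Fin n) ℝ} (hπ : π ∈ GammaStar (m := m) q) :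
    (β (t + 1) - β t) * frob c (sinkPlan p q c β (t + 1))
      + KLvec (rowSum (sinkPlan p q c β (t + 1))) p + KLmat π (sinkPlan p q c β (t + 1)) ≤
      (β (t + 1) - β t) * frob c π + KLvec (rowSum π) p + KLmat π (sinkPlan p q c β t) := by
  haveI : Nonempty (Fin n) := ⟨⟨0, hn⟩⟩
  have h0 := sinkAB_pos c β hm hn hp hq t
  have h1 := sinkAB_pos c β hm hn hp hq (t + 1)
  refine one_step hn (d := fun j => (sinkAB p q c β (t + 1)).2 j / (sinkAB p q c β t).2 j)
    (sinkPlan_pos c β hm hn hp hq (t + 1)) (sinkPlan_pos c β hm hn hp hq t) hπ.1 hp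
    (fun j => div_pos (h1.2 j) (h0.2 j))
    (hπ.2.trans (sinkPlan_col c β hm hn hp hq t).symm) ?_
  intro i j
  have hpos : 0 < ∑ j, gibbs c (β t) i j * (sinkAB p q c β t).2 j :=
    Finset.sum_pos (fun j _ => mul_pos (Real.exp_pos _) (h0.2 j)) Finset.univ_nonempty
  have ha : (sinkAB p q c β (t + 1)).1 i =
    p i / ∑ j, gibbs c (β t) i j * (sinkAB p q c β t).2 j := rfl
  have hrow : rowSum (sinkPlan p q c β t) i =
      (sinkAB p q c β t).1 i * ∑ j, gibbs c (β t) i j * (sinkAB p q c β t).2 j := by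
    unfold rowSum sinkPlan
    rw [Finset.mul_sum]
    exact Finset.sum_congr rfl fun j _ => by ring
  have hg : gibbs c (β (t + 1)) i j =
      gibbs c (β t) i j * Real.exp (-((β (t + 1) - β t) * c i j)) := by
    unfold gibbs
    rw [← Real.exp_add]; congr 1; ring
  have e1 := (h0.1 i).ne'
  have e2 := (h0.2 j).ne'
  have e3 := hpos.ne'
  rw [hrow]
  unfold sinkPlan
  rw [ha, hg]
  generalize (∑ j, gibbs c (β t) i j * (sinkAB p q c β t).2 j) = S at *
  field_simp

end sink

/-- OMD guarantee for Annealed Sinkhorn, Lemma 2, Eq. (8).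
If `c ≥ 0` and `α_t = β_t - β_{t-1}` is nonnegative and nonincreasing, then for every `t ≥ 1`
and every `π ∈ Γ(*,q)`:
`α_t ⟨c,π_t⟩ + KL(π_t𝟙|p) ≤ KL(π𝟙|p) + ((β_t - β_0)/t)⟨c,π⟩ + KL(π|π_0)/t`. -/
theorem annealed_sinkhorn_OMD_guarantee_pos
    {m n : ℕ} (p : Fin m → ℝ) (q : Fin n → ℝ) (c : Matrix (Fin m) (Fin n) ℝ)
    (hp : p ∈ simplexPos m) (hq : q ∈ simplexPos n) (hc : ∀ i j, 0 ≤ c i j)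
    (β : ℕ → ℝ) (hβpos : ∀ t, 0 < β t)
    (hαnonneg : ∀ t, 0 ≤ β (t + 1) - β t)
    (hαnonincr : ∀ t, β (t + 2) - β (t + 1) ≤ β (t + 1) - β t) :
    ∀ t, 1 ≤ t → ∀ π' ∈ GammaStar (m := m) q,
      (β t - β (t - 1)) * frob c (sinkPlan p q c β t) +
          KLvec (rowSum (sinkPlan p q c β t)) p ≤
        KLvec (rowSum π') p + ((β t - β 0) / (t : ℝ)) * frob c π' +
          KLmat π' (sinkPlan p q c β 0) / (t : ℝ) := by
  have hm : 0 < m := by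
    rcases Nat.eq_zero_or_pos m with h | h
    · subst h; have := hp.2; simp at this
    · exact h
  have hn : 0 < n := by
    rcases Nat.eq_zero_or_pos n with h | h
    · subst h; have := hq.2; simp at this
    · exact h
  intro t ht π hπ
  obtain ⟨t, rfl⟩ : ∃ s, t = s + 1 := ⟨t - 1, by omega⟩
  have hpos := sinkPlan_pos c β hm hn hp.1 hq.1
  have step := fun s => @sink_step m n p q c β hm hn hp.1 hq.1 s
  -- monotonicity of the regularized objective along the iterates
  have mono : ∀ s, (β (s + 2) - β (s + 1)) * frob c (sinkPlan p q c β (s + 2))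
      + KLvec (rowSum (sinkPlan p q c β (s + 2))) p ≤
      (β (s + 1) - β s) * frob c (sinkPlan p q c β (s + 1))
      + KLvec (rowSum (sinkPlan p q c β (s + 1))) p := by
    intro s
    have h := step (s + 1) (π := sinkPlan p q c β (s + 1))
      ⟨fun i j => (hpos (s + 1) i j).le, sinkPlan_col c β hm hn hp.1 hq.1 s⟩
    have h0 : KLmat (sinkPlan p q c β (s + 1)) (sinkPlan p q c β (s + 1)) = 0 := by
      unfold KLmat
      refine Finset.sum_eq_zero fun i _ => Finset.sum_eq_zero fun j _ => ?_
      rw [div_self (hpos (s + 1) i j).ne']; simp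
    have h1 : 0 ≤ KLmat (sinkPlan p q c β (s + 1)) (sinkPlan p q c β (s + 2)) :=
      KLmat_nonneg' (fun i j => (hpos (s + 1) i j).le) (hpos (s + 2))
    have h2 : 0 ≤ frob c (sinkPlan p q c β (s + 1)) :=
      Finset.sum_nonneg fun i _ => Finset.sum_nonneg fun j _ =>
        mul_nonneg (hc i j) (hpos (s + 1) i j).le
    have h3 := mul_le_mul_of_nonneg_right (hαnonincr s) h2
    rw [h0] at h
    simp only [add_assoc, one_add_one_eq_two] at h ⊢
    linarith
  have main : ∀ s : ℕ, ((s : ℝ) + 1) * ((β (s + 1) - β s) * frob c (sinkPlan p q c β (s + 1))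
      + KLvec (rowSum (sinkPlan p q c β (s + 1))) p) + KLmat π (sinkPlan p q c β (s + 1)) ≤
      ((s : ℝ) + 1) * KLvec (rowSum π) p + (β (s + 1) - β 0) * frob c π
        + KLmat π (sinkPlan p q c β 0) := by
    intro s
    induction s with
    | zero =>
      have h := step 0 hπ
      simp only [Nat.cast_zero, zero_add, one_mul] at h ⊢
      linarith
    | succ s ih =>
      have h := step (s + 1) hπ
      have h2 := mul_le_mul_of_nonneg_left (mono s) (by positivity : (0 : ℝ) ≤ (s : ℝ) + 1)
      push_cast
      simp only [add_assoc, one_add_one_eq_two] at h h2 ih ⊢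
      linarith
  have h := main t
  have hK : 0 ≤ KLmat π (sinkPlan p q c β (t + 1)) := KLmat_nonneg' hπ.1 (hpos (t + 1))
  have hT : (0 : ℝ) < (t : ℝ) + 1 := by positivity
  rw [Nat.add_sub_cancel]
  push_cast
  have e : KLvec (rowSum π) p + (β (t + 1) - β 0) / ((t : ℝ) + 1) * frob c π
      + KLmat π (sinkPlan p q c β 0) / ((t : ℝ) + 1) =
      (((t : ℝ) + 1) * KLvec (rowSum π) p + (β (t + 1) - β 0) * frob c π
        + KLmat π (sinkPlan p q c β 0)) / ((t : ℝ) + 1) := by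
    field_simp
  rw [e, le_div_iff₀ hT, mul_comm]
  linarith

end
end

section
/- Let p ∈ Δ_m, q ∈ Δ_n, c ∈ ℝ^{m×n}, β > 0, and let π ∈ Δ_{m×n} (a nonnegative m×n matrix with total mass 1) be of the form π = diag(a) e^{−βc} diag(b) for some a ∈ ℝ_+^m and b ∈ ℝ_+^n. Let proj_{Γ(p,q)}(π) be the output of the rounding procedure (Algorithm 3). Then proj_{Γ(p,q)}(π) ∈ Γ(p,q) and ⟨c, proj_{Γ(p,q)}(π)⟩ − OT(p,q) ≤ β^{-1} log(mn) + 4(‖π𝟙 − p‖₁ + ‖πᵀ𝟙 − q‖₁) ‖c‖_osc. -/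
open Finset Filter Topology ENNReal

noncomputable section

lemma frob_le_osc {m n : ℕ} (c x : Matrix (Fin m) (Fin n) ℝ) (hx : ∑ i, ∑ j, x i j = 0) :
    frob c x ≤ cOsc c * ∑ i, ∑ j, |x i j| := by
  have hU : ∀ i j, c i j ≤ ⨆ i, ⨆ j, c i j := fun i j =>
    (le_ciSup (f := fun j => c i j) (Set.finite_range _).bddAbove j).trans
      (le_ciSup (f := fun i => ⨆ j, c i j) (Set.finite_range _).bddAbove i)
  have hL : ∀ i j, ⨅ i, ⨅ j, c i j ≤ c i j := fun i j =>
    (ciInf_le (f := fun i => ⨅ j, c i j) (Set.finite_range _).bddBelow i).trans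
      (ciInf_le (f := fun j => c i j) (Set.finite_range _).bddBelow j)
  unfold cOsc frob
  generalize (⨆ i, ⨆ j, c i j) = U at *
  generalize (⨅ i, ⨅ j, c i j) = L at *
  have h1 : ∑ i, ∑ j, c i j * x i j = ∑ i, ∑ j, (c i j - L) * x i j := by
    have : ∑ i, ∑ j, L * x i j = 0 := by
      simp_rw [← Finset.mul_sum]; rw [hx, mul_zero]
    simp_rw [sub_mul, Finset.sum_sub_distrib]
    rw [this, sub_zero]
  rw [h1]
  simp_rw [Finset.mul_sum]
  refine Finset.sum_le_sum fun i _ => Finset.sum_le_sum fun j _ => ?_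
  have := hU i j
  have := hL i j
  calc (c i j - L) * x i j ≤ (c i j - L) * |x i j| :=
        mul_le_mul_of_nonneg_left (le_abs_self _) (by linarith)
    _ ≤ _ := mul_le_mul_of_nonneg_right (by linarith) (abs_nonneg _)

lemma min_scale {s t : ℝ} (hs : 0 ≤ s) (ht : 0 ≤ t) : min 1 (t / s) * s = min s t := by
  rcases hs.eq_or_lt with h | h
  · subst h; simp [ht]
  · rw [min_mul_of_nonneg _ _ hs, one_mul, div_mul_cancel₀ _ h.ne']

lemma round_main {m n : ℕ} (p : Fin m → ℝ) (q : Fin n → ℝ)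
    (hp : p ∈ simplexNN m) (hq : q ∈ simplexNN n)
    (π : Matrix (Fin m) (Fin n) ℝ) (hπnn : ∀ i j, 0 ≤ π i j)
    (hπmass : ∑ i, ∑ j, π i j = 1) :
    roundPlan p q π ∈ Gamma p q ∧
      ∑ i, ∑ j, |roundPlan p q π i j - π i j| ≤
        2 * (l1vec (fun i => rowSum π i - p i) + l1vec (fun j => colSum π j - q j)) := by
  obtain ⟨hp0, hp1⟩ := hp
  obtain ⟨hq0, hq1⟩ := hq
  obtain ⟨π', hπ'⟩ : ∃ π' : Matrix (Fin m) (Fin n) ℝ,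
    π' = fun i j => min 1 (p i / rowSum π i) * π i j := ⟨_, rfl⟩
  obtain ⟨π'', hπ''⟩ : ∃ π'' : Matrix (Fin m) (Fin n) ℝ,
    π'' = fun i j => π' i j * min 1 (q j / colSum π' j) := ⟨_, rfl⟩
  have hR : roundPlan p q π = fun i j => π'' i j +
    (p i - rowSum π'' i) * (q j - colSum π'' j) / l1vec (fun i' => p i' - rowSum π'' i') := by
    subst hπ''; subst hπ'; rfl
  have r0 : ∀ i, 0 ≤ rowSum π i := fun i => Finset.sum_nonneg fun j _ => hπnn i j
  have eA0 : ∀ i j, 0 ≤ π' i j := fun i j => by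
    rw [hπ']
    exact mul_nonneg (le_min zero_le_one (div_nonneg (hp0 i) (r0 i))) (hπnn i j)
  have eA1 : ∀ i j, π' i j ≤ π i j := fun i j => by
    rw [hπ']
    exact mul_le_of_le_one_left (hπnn i j) (min_le_left _ _)
  have rAA : ∀ i, rowSum π' i = min (rowSum π i) (p i) := fun i => by
    rw [← min_scale (r0 i) (hp0 i), hπ']
    simp only [rowSum, Finset.mul_sum]
  have cA0 : ∀ j, 0 ≤ colSum π' j := fun j => Finset.sum_nonneg fun i _ => eA0 i j
  have cA1 : ∀ j, colSum π' j ≤ colSum π j := fun j => Finset.sum_le_sum fun i _ => eA1 i j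
  have eB0 : ∀ i j, 0 ≤ π'' i j := fun i j => by
    rw [hπ'']
    exact mul_nonneg (eA0 i j) (le_min zero_le_one (div_nonneg (hq0 j) (cA0 j)))
  have eB1 : ∀ i j, π'' i j ≤ π' i j := fun i j => by
    rw [hπ'']
    exact mul_le_of_le_one_right (eA0 i j) (min_le_left _ _)
  have cBB : ∀ j, colSum π'' j = min (colSum π' j) (q j) := fun j => by
    rw [← min_scale (cA0 j) (hq0 j), hπ'', mul_comm]
    simp only [colSum, Finset.sum_mul]
  have rB1 : ∀ i, rowSum π'' i ≤ p i := fun i =>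
    (Finset.sum_le_sum fun j _ => eB1 i j).trans ((rAA i).le.trans (min_le_right _ _))
  have cB1 : ∀ j, colSum π'' j ≤ q j := fun j => (cBB j).le.trans (min_le_right _ _)
  have sc : ∀ x : Matrix (Fin m) (Fin n) ℝ, ∑ j, colSum x j = ∑ i, rowSum x i := fun x => by
    simp only [colSum, rowSum]; exact Finset.sum_comm
  obtain ⟨D, hD⟩ : ∃ D, D = 1 - ∑ i, rowSum π'' i := ⟨_, rfl⟩
  have hl1 : l1vec (fun i' => p i' - rowSum π'' i') = D := by
    unfold l1vec
    rw [hD, ← hp1, ← Finset.sum_sub_distrib]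
    exact Finset.sum_congr rfl fun i _ => abs_of_nonneg (sub_nonneg.2 (rB1 i))
  have hDp : ∑ i, (p i - rowSum π'' i) = D := by rw [Finset.sum_sub_distrib, hp1, hD]
  have hDq : ∑ j, (q j - colSum π'' j) = D := by rw [Finset.sum_sub_distrib, hq1, hD, sc]
  have hD0 : 0 ≤ D := hDp ▸ Finset.sum_nonneg fun i _ => sub_nonneg.2 (rB1 i)
  have zp : D = 0 → ∀ i, p i - rowSum π'' i = 0 := fun h i =>
    (Finset.sum_eq_zero_iff_of_nonneg (fun i _ => sub_nonneg.2 (rB1 i))).1 (hDp.trans h) i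
      (Finset.mem_univ i)
  have zq : D = 0 → ∀ j, q j - colSum π'' j = 0 := fun h j =>
    (Finset.sum_eq_zero_iff_of_nonneg (fun j _ => sub_nonneg.2 (cB1 j))).1 (hDq.trans h) j
      (Finset.mem_univ j)
  rw [hl1] at hR
  have row : rowSum (roundPlan p q π) = p := by
    funext i
    have : rowSum (roundPlan p q π) i
        = rowSum π'' i + (p i - rowSum π'' i) * D / D := by
      rw [hR]
      conv_lhs => unfold rowSum
      rw [Finset.sum_add_distrib, ← Finset.sum_div, ← Finset.mul_sum, hDq]
      rfl
    rw [this]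
    by_cases h : D = 0
    · have := zp h i
      rw [h]; simp; linarith
    · rw [mul_div_cancel_right₀ _ h]; ring
  have col : colSum (roundPlan p q π) = q := by
    funext j
    have : colSum (roundPlan p q π) j
        = colSum π'' j + D * (q j - colSum π'' j) / D := by
      rw [hR]
      conv_lhs => unfold colSum
      rw [Finset.sum_add_distrib, ← Finset.sum_div, ← Finset.sum_mul, hDp]
      rfl
    rw [this]
    by_cases h : D = 0
    · have := zq h j
      rw [h]; simp; linarith
    · rw [mul_div_cancel_left₀ _ h]; ring
  have ge : ∀ i j, π'' i j ≤ roundPlan p q π i j := fun i j => by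
    rw [hR]
    exact le_add_of_nonneg_right
      (div_nonneg (mul_nonneg (sub_nonneg.2 (rB1 i)) (sub_nonneg.2 (cB1 j))) hD0)
  refine ⟨⟨fun i j => (eB0 i j).trans (ge i j), row, col⟩, ?_⟩
  have m1 : ∑ i, ∑ j, roundPlan p q π i j = 1 := by
    rw [← hp1]; exact Finset.sum_congr rfl fun i _ => congrFun row i
  have m2 : ∑ i, ∑ j, π'' i j = 1 - D := by
    have h : ∑ i, ∑ j, π'' i j = ∑ i, rowSum π'' i := rfl
    linarith
  have b1 : ∑ i, ∑ j, |roundPlan p q π i j - π i j| ≤ 2 * D := by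
    calc ∑ i, ∑ j, |roundPlan p q π i j - π i j|
        ≤ ∑ i, ∑ j, ((roundPlan p q π i j - π'' i j) + (π i j - π'' i j)) := by
          refine Finset.sum_le_sum fun i _ => Finset.sum_le_sum fun j _ => ?_
          have h1 := ge i j
          have h2 := (eB1 i j).trans (eA1 i j)
          rw [abs_le]; constructor <;> linarith
      _ = 2 * D := by
          simp_rw [Finset.sum_add_distrib, Finset.sum_sub_distrib]
          rw [m1, m2, hπmass]; ring
  have b2 : 1 - ∑ i, rowSum π' i ≤ l1vec (fun i => rowSum π i - p i) := by
    have : ∑ i, rowSum π i = 1 := hπmass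
    rw [← this, ← Finset.sum_sub_distrib]
    refine Finset.sum_le_sum fun i _ => ?_
    rw [rAA i]
    rcases min_choice (rowSum π i) (p i) with h | h <;> rw [h]
    · simp
    · exact le_abs_self _
  have b3 : ∑ i, rowSum π' i - ∑ i, rowSum π'' i ≤ l1vec (fun j => colSum π j - q j) := by
    rw [← sc, ← sc, ← Finset.sum_sub_distrib]
    refine Finset.sum_le_sum fun j _ => ?_
    rw [cBB j]
    rcases min_choice (colSum π' j) (q j) with h | h <;> rw [h]
    · simp
    · exact (sub_le_sub_right (cA1 j) _).trans (le_abs_self _)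
  linarith

lemma entropic_opt {m n : ℕ} (c : Matrix (Fin m) (Fin n) ℝ)
    (β : ℝ) (hβ : 0 < β)
    (π : Matrix (Fin m) (Fin n) ℝ) (hπnn : ∀ i j, 0 ≤ π i j)
    (hπmass : ∑ i, ∑ j, π i j = 1)
    (a : Fin m → ℝ) (b : Fin n → ℝ)
    (hform : π = fun i j => a i * Real.exp (-(β * c i j)) * b j)
    (g : Matrix (Fin m) (Fin n) ℝ) (hg : g ∈ Gamma (rowSum π) (colSum π)) :
    frob c π ≤ frob c g + β⁻¹ * Real.log (m * n) := by
  obtain ⟨g0, gr, gc⟩ := hg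
  have hm : m ≠ 0 := by rintro rfl; simp at hπmass
  have hn : n ≠ 0 := by rintro rfl; simp at hπmass
  have hN : (0 : ℝ) < m * n := by positivity
  have π1 : ∀ i j, π i j ≤ 1 := fun i j => by
    rw [← hπmass]
    exact (Finset.single_le_sum (f := fun j => π i j) (fun j _ => hπnn i j)
      (Finset.mem_univ j)).trans
      (Finset.single_le_sum (f := fun i => ∑ j, π i j)
        (fun i _ => Finset.sum_nonneg fun j _ => hπnn i j) (Finset.mem_univ i))
  -- the key identity for any plan with the same marginals
  have key : ∀ x : Matrix (Fin m) (Fin n) ℝ, (∀ i j, a i = 0 ∨ b j = 0 → x i j = 0) →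
      ∑ i, ∑ j, x i j * Real.log (π i j) =
        ∑ i, rowSum x i * Real.log (a i) + ∑ j, colSum x j * Real.log (b j)
          - β * frob c x := by
    intro x hx
    have h1 : ∑ j, colSum x j * Real.log (b j) = ∑ i, ∑ j, x i j * Real.log (b j) := by
      simp only [colSum, Finset.sum_mul]; exact Finset.sum_comm
    rw [h1]
    simp only [rowSum, frob, Finset.sum_mul, Finset.mul_sum]
    rw [← Finset.sum_add_distrib, ← Finset.sum_sub_distrib]
    refine Finset.sum_congr rfl fun i _ => ?_
    rw [← Finset.sum_add_distrib, ← Finset.sum_sub_distrib]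
    refine Finset.sum_congr rfl fun j _ => ?_
    by_cases h : a i = 0 ∨ b j = 0
    · rw [hx i j h]; ring
    · push Not at h
      rw [hform]
      simp only
      rw [Real.log_mul (mul_ne_zero h.1 (Real.exp_ne_zero _)) h.2,
        Real.log_mul h.1 (Real.exp_ne_zero _), Real.log_exp]
      ring
  have zπ : ∀ i j, a i = 0 ∨ b j = 0 → π i j = 0 := fun i j h => by
    rw [hform]; rcases h with h | h <;> simp [h]
  have zg : ∀ i j, a i = 0 ∨ b j = 0 → g i j = 0 := fun i j h => by
    rcases h with h | h
    · have : ∑ j, g i j = 0 := (congrFun gr i).trans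
        (Finset.sum_eq_zero fun j _ => zπ i j (Or.inl h))
      exact (Finset.sum_eq_zero_iff_of_nonneg (fun j _ => g0 i j)).1 this j (Finset.mem_univ j)
    · have : ∑ i, g i j = 0 := (congrFun gc j).trans
        (Finset.sum_eq_zero fun i _ => zπ i j (Or.inr h))
      exact (Finset.sum_eq_zero_iff_of_nonneg (fun i _ => g0 i j)).1 this i (Finset.mem_univ i)
  have k1 := key π zπ
  have k2 := key g zg
  rw [gr, gc] at k2
  have n1 : ∑ i, ∑ j, g i j * Real.log (π i j) ≤ 0 :=
    Finset.sum_nonpos fun i _ => Finset.sum_nonpos fun j _ =>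
      mul_nonpos_of_nonneg_of_nonpos (g0 i j) (Real.log_nonpos (hπnn i j) (π1 i j))
  have n2 : -(∑ i, ∑ j, π i j * Real.log (π i j)) ≤ Real.log (m * n) := by
    have : ∑ i, ∑ j, (-(π i j * Real.log (π i j))) ≤
        ∑ i : Fin m, ∑ j : Fin n, (π i j * Real.log (m * n) + ((m * n : ℝ)⁻¹ - π i j)) := by
      refine Finset.sum_le_sum fun i _ => Finset.sum_le_sum fun j _ => ?_
      rcases (hπnn i j).eq_or_lt with h | h
      · rw [← h]; simp; positivity
      · have h1 := Real.log_le_sub_one_of_pos (inv_pos.2 (mul_pos hN h))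
        rw [Real.log_inv, Real.log_mul hN.ne' h.ne'] at h1
        have h2 := mul_le_mul_of_nonneg_left h1 h.le
        have h3 : π i j * ((m * n * π i j : ℝ)⁻¹ - 1) = (m * n : ℝ)⁻¹ - π i j := by
          field_simp
        rw [h3] at h2
        linarith
    simp_rw [Finset.sum_neg_distrib, Finset.sum_add_distrib, Finset.sum_sub_distrib,
      ← Finset.sum_mul] at this
    rw [hπmass] at this
    simp only [Finset.sum_const, Finset.card_univ, Fintype.card_fin, nsmul_eq_mul] at this
    have h4 : (m : ℝ) * (n * (m * n : ℝ)⁻¹) = 1 := by field_simp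
    rw [h4] at this
    linarith
  have fin : β * frob c π ≤ β * frob c g + Real.log (m * n) := by linarith
  calc frob c π = β⁻¹ * (β * frob c π) := by field_simp
    _ ≤ β⁻¹ * (β * frob c g + Real.log (m * n)) :=
        mul_le_mul_of_nonneg_left fin (inv_nonneg.2 hβ.le)
    _ = _ := by field_simp

lemma frob_sub' {m n : ℕ} (c x y : Matrix (Fin m) (Fin n) ℝ) :
    frob c (fun i j => x i j - y i j) = frob c x - frob c y := by
  simp only [frob, mul_sub, Finset.sum_sub_distrib]

/-- rounding guarantee, Lemma 1, extracted from Altschuler et al..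
If `π ∈ Δ_{m×n}` has the form `diag(a) e^{-βc} diag(b)`, then the rounded plan belongs to
`Γ(p,q)` and `⟨c, proj(π)⟩ - OT(p,q) ≤ β⁻¹ log(mn) + 4(‖π𝟙-p‖₁ + ‖πᵀ𝟙-q‖₁)‖c‖_osc`. -/
theorem rounding_guarantee
    {m n : ℕ} (p : Fin m → ℝ) (q : Fin n → ℝ) (c : Matrix (Fin m) (Fin n) ℝ)
    (hp : p ∈ simplexNN m) (hq : q ∈ simplexNN n)
    (β : ℝ) (hβ : 0 < β)
    (π : Matrix (Fin m) (Fin n) ℝ) (hπnn : ∀ i j, 0 ≤ π i j)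
    (hπmass : ∑ i, ∑ j, π i j = 1)
    (a : Fin m → ℝ) (b : Fin n → ℝ) (ha : ∀ i, 0 ≤ a i) (hb : ∀ j, 0 ≤ b j)
    (hform : π = fun i j => a i * Real.exp (-(β * c i j)) * b j) :
    roundPlan p q π ∈ Gamma p q ∧
      frob c (roundPlan p q π) - OTval c p q ≤
        β⁻¹ * Real.log (m * n) +
          4 * (l1vec (fun i => rowSum π i - p i) + l1vec (fun j => colSum π j - q j)) *
            cOsc c := by
  obtain ⟨hmem, hdist⟩ := round_main p q hp hq π hπnn hπmass
  refine ⟨hmem, ?_⟩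
  have : Nonempty (Gamma p q) := ⟨⟨_, hmem⟩⟩
  rw [sub_le_comm]
  refine le_ciInf fun γ => ?_
  obtain ⟨g, hg⟩ := γ
  have mass : ∀ x ∈ Gamma p q, ∑ i, ∑ j, x i j = 1 := fun x hx => by
    rw [← hp.2]; exact Finset.sum_congr rfl fun i _ => congrFun hx.2.1 i
  have hr : rowSum π ∈ simplexNN m := ⟨fun i => Finset.sum_nonneg fun j _ => hπnn i j, hπmass⟩
  have hc : colSum π ∈ simplexNN n := ⟨fun j => Finset.sum_nonneg fun i _ => hπnn i j, by
    rw [← hπmass]; exact Finset.sum_comm⟩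
  obtain ⟨hmem', hdist'⟩ := round_main _ _ hr hc g hg.1 (mass g hg)
  have hopt := entropic_opt c β hβ π hπnn hπmass a b hform _ hmem'
  have mass' : ∑ i, ∑ j, roundPlan (rowSum π) (colSum π) g i j = 1 := by
    rw [← hr.2]; exact Finset.sum_congr rfl fun i _ => congrFun hmem'.2.1 i
  have o1 := frob_le_osc c (fun i j => roundPlan p q π i j - π i j) (by
    simp_rw [Finset.sum_sub_distrib]; rw [mass _ hmem, hπmass, sub_self])
  have o2 := frob_le_osc c (fun i j => roundPlan (rowSum π) (colSum π) g i j - g i j) (by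
    simp_rw [Finset.sum_sub_distrib]; rw [mass', mass g hg, sub_self])
  rw [frob_sub'] at o1 o2
  have hosc : 0 ≤ cOsc c := by
    have hm : m ≠ 0 := by rintro rfl; simp at hπmass
    have hn : n ≠ 0 := by rintro rfl; simp at hπmass
    let i : Fin m := ⟨0, Nat.pos_of_ne_zero hm⟩
    let j : Fin n := ⟨0, Nat.pos_of_ne_zero hn⟩
    have hU : c i j ≤ ⨆ i, ⨆ j, c i j :=
      (le_ciSup (f := fun j => c i j) (Set.finite_range _).bddAbove j).trans
        (le_ciSup (f := fun i => ⨆ j, c i j) (Set.finite_range _).bddAbove i)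
    have hL : ⨅ i, ⨅ j, c i j ≤ c i j :=
      (ciInf_le (f := fun i => ⨅ j, c i j) (Set.finite_range _).bddBelow i).trans
        (ciInf_le (f := fun j => c i j) (Set.finite_range _).bddBelow j)
    unfold cOsc
    linarith
  rw [hg.2.1, hg.2.2] at hdist'
  have s1 : l1vec (fun i => p i - rowSum π i) = l1vec (fun i => rowSum π i - p i) :=
    Finset.sum_congr rfl fun i _ => abs_sub_comm _ _
  have s2 : l1vec (fun j => q j - colSum π j) = l1vec (fun j => colSum π j - q j) :=
    Finset.sum_congr rfl fun j _ => abs_sub_comm _ _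
  rw [s1, s2] at hdist'
  have t1 := mul_le_mul_of_nonneg_left hdist hosc
  have t2 := mul_le_mul_of_nonneg_left hdist' hosc
  simp only
  linarith

end
end
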